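/- arXiv:1108.2464 — 5 statements merged into one kernel-verified Lean document; each statement's English description precedes it below -/
import Mathlib

section
/- There exists the following Grothendieck-type bound with Krivine's constant: for every m, n ∈ ℕ, every m × n real matrix A = (a_{ij}), every d ∈ ℕ, and all unit vectors x_1, …, x_m, y_1, …, y_n in ℝ^d, one has ∑_{i=1}^m ∑_{j=1}^n a_{ij} ⟨x_i, y_j⟩ ≤ (π / (2 · log(1 + √2))) · max over signs ε_1, …, ε_m, δ_1, …, δ_n ∈ {−1, 1} of ∑_{i=1}^m ∑_{j=1}^n a_{ij} ε_i δ_j. -/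
open Real

/-!
Let `c = log (1 + √2)`, so that `sinh c = 1`. Rounding centred unit-variance Gaussian variables
`X i`, `Y j` to their signs and bounding the expectation of the resulting form by its maximum gives
the inequality for the numbers `𝔼[sgn (X i) * sgn (Y j)] = 2 / π * arcsin cov[X i, Y j]`. It
therefore suffices that the variables can be chosen with `cov[X i, Y j] = sin (c * ⟪x i, y j⟫)`: the
factor `2 * c / π` comes out of the sum. Such a covariance matrix has entries `sinh (c * ⟪·, ·⟫)` on
the diagonal blocks and `sin (c * ⟪·, ·⟫)` on the off-diagonal ones. As the power series of `sin`
and `sinh` agree up to signs, it is a nonnegative combination of Hadamard powers of the Gram matrix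
with some of their off-diagonal signs flipped, hence positive semidefinite by the Schur product
theorem; its diagonal is `sinh c = 1` for unit vectors.
-/

section KrivineInequality

open MeasureTheory ProbabilityTheory Matrix
open scoped RealInnerProductSpace

section PosSemidef

variable {n 𝕜 : Type*} [RCLike 𝕜]

open scoped ComplexOrder

lemma posSemidef_of_hasSum [Finite n] {τ : Type*} {M : τ → Matrix n n 𝕜} {S : Matrix n n 𝕜}
    (hM : ∀ k, (M k).PosSemidef) (hS : ∀ p q, HasSum (fun k ↦ M k p q) (S p q)) :
    S.PosSemidef := by
  have := Fintype.ofFinite n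
  refine .of_dotProduct_mulVec_nonneg ?_ fun w ↦ ?_
  · ext p q
    refine (hS q p).star.unique ?_
    simpa only [(hM _).isHermitian.apply p q] using hS p q
  · have hform : HasSum (fun k ↦ star w ⬝ᵥ M k *ᵥ w) (star w ⬝ᵥ S *ᵥ w) :=
      hasSum_sum fun p _ ↦ (hasSum_sum fun q _ ↦ (hS p q).mul_right (w q)).mul_left (star w p)
    exact hform.nonneg fun k ↦ (hM k).dotProduct_mulVec_nonneg w

lemma posSemidef_map_pow [Finite n] {S : Matrix n n 𝕜} (hS : S.PosSemidef) (k : ℕ) :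
    (S.map (· ^ k)).PosSemidef := by
  induction k with
  | zero =>
    convert posSemidef_vecMulVec_self_star (fun _ : n ↦ (1 : 𝕜)) using 1
    ext
    simp [vecMulVec_apply]
  | succ k ih =>
    have hsucc : S.map (· ^ (k + 1)) = S.map (· ^ k) ⊙ S := by
      ext
      simp [pow_succ]
    exact hsucc ▸ ih.hadamard hS

end PosSemidef

section KrivineMatrix

variable {ι κ : Type*}

/-- Krivine's transform of a matrix indexed by `ι ⊕ κ`: it applies `F` to the entries of the
diagonal blocks and `f` to those of the off-diagonal blocks. For `F = sinh (c * ·)` and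
`f = sin (c * ·)` it turns the Gram matrix of the given vectors into the covariance matrix used for
rounding. -/
def krivineMatrix (f F : ℝ → ℝ) (S : Matrix (ι ⊕ κ) (ι ⊕ κ) ℝ) : Matrix (ι ⊕ κ) (ι ⊕ κ) ℝ :=
  fromBlocks (S.toBlocks₁₁.map F) (S.toBlocks₁₂.map f)
    (S.toBlocks₂₁.map f) (S.toBlocks₂₂.map F)

lemma posSemidef_krivineMatrix [Finite ι] [Finite κ] {τ : Type*} {f F : ℝ → ℝ}
    {a : τ → ℝ} {m : τ → ℕ}
    (hf : ∀ t, HasSum (fun k ↦ a k * t ^ m k) (f t))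
    (hF : ∀ t, HasSum (fun k ↦ |a k| * t ^ m k) (F t))
    {S : Matrix (ι ⊕ κ) (ι ⊕ κ) ℝ} (hS : S.PosSemidef) :
    (krivineMatrix f F S).PosSemidef := by
  -- Conjugating by `s k` multiplies the off-diagonal blocks, and only those, by the sign of `a k`,
  -- which turns the coefficient `|a k|` there into `a k`.
  let s (k : τ) : ι ⊕ κ → ℝ := Sum.elim (fun _ ↦ SignType.sign (a k)) (fun _ ↦ 1)
  let T (k : τ) : Matrix (ι ⊕ κ) (ι ⊕ κ) ℝ :=
    |a k| • (vecMulVec (s k) (star (s k)) ⊙ S.map (· ^ m k))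
  refine posSemidef_of_hasSum (M := T) (fun k ↦ ?_) ?_
  · exact ((posSemidef_vecMulVec_self_star (s k)).hadamard
      (posSemidef_map_pow hS (m k))).smul (abs_nonneg (a k))
  · have habs_mul_sign (k : τ) : |a k| * SignType.sign (a k) = a k := abs_mul_sign (a k)
    have habs_mul_sign_mul_sign (k : τ) :
        |a k| * (SignType.sign (a k) * SignType.sign (a k)) = |a k| := by
      rw [← mul_assoc, habs_mul_sign, self_mul_sign]
    rintro (i | j) (i' | j') <;>
      simp [T, s, krivineMatrix, toBlocks₁₁, toBlocks₁₂, toBlocks₂₁, toBlocks₂₂,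
        vecMulVec_apply, ← mul_assoc, habs_mul_sign, habs_mul_sign_mul_sign, hf, hF]

lemma exists_posSemidef_arcsin_eq [Finite ι] [Finite κ] {E : Type*}
    [NormedAddCommGroup E] [InnerProductSpace ℝ E] {c : ℝ} (hc₀ : 0 ≤ c) (hc : sinh c ≤ 1)
    {x : ι → E} {y : κ → E} (hx : ∀ i, ‖x i‖ ≤ 1) (hy : ∀ j, ‖y j‖ ≤ 1) :
    ∃ S : Matrix (ι ⊕ κ) (ι ⊕ κ) ℝ, S.PosSemidef ∧ (∀ p, S p p = 1) ∧
      ∀ i j, arcsin (S (.inl i) (.inr j)) = c * ⟪x i, y j⟫ := by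
  classical
  let K := krivineMatrix (fun t ↦ sin (c * t)) (fun t ↦ sinh (c * t)) (gram ℝ (Sum.elim x y))
  have hK : K.PosSemidef := by
    refine posSemidef_krivineMatrix (m := fun k ↦ 2 * k + 1)
      (a := fun k ↦ (-1) ^ k * (c ^ (2 * k + 1) / (2 * k + 1).factorial))
      (fun t ↦ ?_) (fun t ↦ ?_) (posSemidef_gram ℝ _)
    · convert hasSum_sin (c * t) using 2
      ring
    · convert hasSum_sinh (c * t) using 2
      rw [abs_mul, abs_neg_one_pow, abs_of_nonneg (by positivity)]
      ring
  have hsinh {z : E} (hz : ‖z‖ ≤ 1) : sinh (c * ⟪z, z⟫) ≤ 1 := by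
    rw [real_inner_self_eq_norm_sq]
    exact (sinh_le_sinh.2 (mul_le_of_le_one_right hc₀ (pow_le_one₀ (norm_nonneg z) hz))).trans hc
  have hdiag : ∀ p, K p p ≤ 1 := by
    rintro (i | j)
    exacts [hsinh (hx i), hsinh (hy j)]
  -- Raising the diagonal of `K` to `1` preserves positivity and leaves the off-diagonal blocks
  -- unchanged.
  refine ⟨K + diagonal fun p ↦ 1 - K p p,
    hK.add (.diagonal fun p ↦ sub_nonneg.2 (hdiag p)), fun p ↦ by simp, fun i j ↦ ?_⟩
  have hinner : |c * ⟪x i, y j⟫| ≤ π / 2 := by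
    have h₁ : |⟪x i, y j⟫| ≤ 1 := (abs_real_inner_le_norm _ _).trans
      (mul_le_one₀ (hx i) (norm_nonneg _) (hy j))
    calc |c * ⟪x i, y j⟫| = c * |⟪x i, y j⟫| := by rw [abs_mul, abs_of_nonneg hc₀]
      _ ≤ c := mul_le_of_le_one_right hc₀ h₁
      _ ≤ 1 := (self_le_sinh_iff.2 hc₀).trans hc
      _ ≤ π / 2 := one_le_pi_div_two
  simpa [K, krivineMatrix, toBlocks₁₂, gram_apply] using
    arcsin_sin (abs_le.1 hinner).1 (abs_le.1 hinner).2

end KrivineMatrix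

section Sgn

/-- The sign of a real number with values in `{1, -1}`, used to round Gaussian variables to signs.
Unlike `Real.sign`, it takes the value `1` at `0`. -/
noncomputable def sgn (t : ℝ) : ℝ := if 0 ≤ t then 1 else -1

lemma sgn_of_nonneg {t : ℝ} (ht : 0 ≤ t) : sgn t = 1 := if_pos ht

lemma sgn_of_neg {t : ℝ} (ht : t < 0) : sgn t = -1 := if_neg ht.not_ge

lemma sgn_eq_one_or_neg_one (t : ℝ) : sgn t = 1 ∨ sgn t = -1 := ite_eq_or_eq _ _ _

lemma abs_sgn (t : ℝ) : |sgn t| = 1 := by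
  rcases sgn_eq_one_or_neg_one t with h | h <;> simp [h]

lemma sgn_mul_of_pos {r : ℝ} (hr : 0 < r) (t : ℝ) : sgn (r * t) = sgn t := by
  simp [sgn, mul_nonneg_iff_of_pos_left hr]

@[fun_prop]
lemma measurable_sgn : Measurable sgn :=
  .ite measurableSet_Ici measurable_const measurable_const

lemma integrable_sgn_mul_sgn {Ω : Type*} [MeasurableSpace Ω] {P : Measure Ω} [IsFiniteMeasure P]
    {X Y : Ω → ℝ} (hX : AEMeasurable X P) (hY : AEMeasurable Y P) :
    Integrable (fun ω ↦ sgn (X ω) * sgn (Y ω)) P :=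
  .of_bound (C := 1) (by fun_prop) (.of_forall fun ω ↦ by simp [abs_sgn])

end Sgn

section Circle

lemma sgn_cos_eq_one {t : ℝ} (h₁ : -(π / 2) ≤ t) (h₂ : t ≤ π / 2) : sgn (cos t) = 1 :=
  sgn_of_nonneg (cos_nonneg_of_neg_pi_div_two_le_of_le h₁ h₂)

lemma sgn_cos_eq_neg_one {t : ℝ} (h₁ : π / 2 < t) (h₂ : t < π + π / 2) : sgn (cos t) = -1 :=
  sgn_of_neg (cos_neg_of_pi_div_two_lt_of_lt h₁ h₂)

lemma intervalIntegral_eq_of_eqOn_Ioo {f : ℝ → ℝ} {a b k : ℝ} (hab : a ≤ b)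
    (hf : ∀ t ∈ Set.Ioo a b, f t = k) : ∫ t in a..b, f t = (b - a) * k := by
  rw [intervalIntegral.integral_of_le hab, integral_Ioc_eq_integral_Ioo,
    setIntegral_congr_fun measurableSet_Ioo hf]
  simp [hab]

lemma integral_sgn_cos_mul_sgn_cos_sub {θ : ℝ} (hθ₀ : 0 ≤ θ) (hθ : θ ≤ π) (a : ℝ) :
    ∫ φ in a..a + 2 * π, sgn (cos φ) * sgn (cos (φ - θ)) = 2 * π - 4 * θ := by
  set f : ℝ → ℝ := fun φ ↦ sgn (cos φ) * sgn (cos (φ - θ)) with hf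
  have hper : f.Periodic (2 * π) := fun φ ↦ by
    simp only [hf, add_sub_right_comm, cos_add_two_pi]
  have hint (a b : ℝ) : IntervalIntegrable f volume a b :=
    ⟨integrable_sgn_mul_sgn (by fun_prop) (by fun_prop),
      integrable_sgn_mul_sgn (by fun_prop) (by fun_prop)⟩
  have h₁ : ∫ φ in (-(π / 2))..(θ - π / 2), f φ = (θ - π / 2 - -(π / 2)) * -1 := by
    refine intervalIntegral_eq_of_eqOn_Ioo (by linarith) fun φ ⟨_, _⟩ ↦ ?_
    simp only [hf]
    rw [sgn_cos_eq_one (by linarith) (by linarith), ← cos_neg (φ - θ),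
      sgn_cos_eq_neg_one (by linarith) (by linarith), one_mul]
  have h₂ : ∫ φ in (θ - π / 2)..(π / 2), f φ = (π / 2 - (θ - π / 2)) * 1 := by
    refine intervalIntegral_eq_of_eqOn_Ioo (by linarith) fun φ ⟨_, _⟩ ↦ ?_
    simp only [hf]
    rw [sgn_cos_eq_one (by linarith) (by linarith), sgn_cos_eq_one (by linarith) (by linarith),
      one_mul]
  have h₃ : ∫ φ in (π / 2)..(θ + π / 2), f φ = (θ + π / 2 - π / 2) * -1 := by
    refine intervalIntegral_eq_of_eqOn_Ioo (by linarith) fun φ ⟨_, _⟩ ↦ ?_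
    simp only [hf]
    rw [sgn_cos_eq_neg_one (by linarith) (by linarith),
      sgn_cos_eq_one (by linarith) (by linarith), mul_one]
  have h₄ : ∫ φ in (θ + π / 2)..(-(π / 2) + 2 * π), f φ =
      (-(π / 2) + 2 * π - (θ + π / 2)) * 1 := by
    refine intervalIntegral_eq_of_eqOn_Ioo (by linarith) fun φ ⟨_, _⟩ ↦ ?_
    simp only [hf]
    rw [sgn_cos_eq_neg_one (by linarith) (by linarith),
      sgn_cos_eq_neg_one (by linarith) (by linarith), neg_one_mul, neg_neg]
  rw [hper.intervalIntegral_add_eq a (-(π / 2)),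
    ← intervalIntegral.integral_add_adjacent_intervals (hint _ (θ + π / 2)) (hint _ _),
    ← intervalIntegral.integral_add_adjacent_intervals (hint _ (π / 2)) (hint _ _),
    ← intervalIntegral.integral_add_adjacent_intervals (hint _ (θ - π / 2)) (hint _ _),
    h₁, h₂, h₃, h₄]
  ring

lemma real_inner_exp_mul_I (φ : ℝ) (z : ℂ) :
    ⟪Complex.exp (φ * Complex.I), z⟫ = ‖z‖ * cos (φ - z.arg) := by
  rw [cos_sub, mul_add, mul_left_comm, Complex.norm_mul_cos_arg, mul_left_comm,
    Complex.norm_mul_sin_arg]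
  simp [Complex.inner, Complex.exp_ofReal_mul_I_re, Complex.exp_ofReal_mul_I_im]
  ring

lemma integral_sgn_inner_mul_sgn_inner_circle {θ : ℝ} (hθ₀ : 0 ≤ θ) (hθ : θ ≤ π)
    {z : ℂ} (hz : z ≠ 0) :
    ∫ φ in 0..2 * π, sgn ⟪Complex.exp ((φ : ℝ) * Complex.I), z⟫ *
      sgn ⟪Complex.exp ((φ - θ : ℝ) * Complex.I), z⟫ = 2 * π - 4 * θ := by
  simp only [real_inner_exp_mul_I, sgn_mul_of_pos (norm_pos_iff.2 hz), sub_right_comm _ θ]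
  rw [intervalIntegral.integral_comp_sub_right (fun φ ↦ sgn (cos φ) * sgn (cos (φ - θ))) z.arg,
    ← integral_sgn_cos_mul_sgn_cos_sub hθ₀ hθ (0 - z.arg)]
  ring_nf

end Circle

section Gaussian

lemma charFunDual_map_prodMk_of_hasGaussianLaw {Ω : Type*} [MeasurableSpace Ω] {P : Measure Ω}
    {X Y : Ω → ℝ} (h : HasGaussianLaw (fun ω ↦ (X ω, Y ω)) P) (L : StrongDual ℝ (ℝ × ℝ)) :
    charFunDual (P.map fun ω ↦ (X ω, Y ω)) L =
      Complex.exp ((L (1, 0) * P[X] + L (0, 1) * P[Y] : ℝ) * Complex.I -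
        (L (1, 0) ^ 2 * Var[X; P] + 2 * (L (1, 0) * (L (0, 1) * cov[X, Y; P])) +
          L (0, 1) ^ 2 * Var[Y; P] : ℝ) / 2) := by
  have := h.isProbabilityMeasure
  have hL (p : ℝ × ℝ) : L p = L (1, 0) * p.1 + L (0, 1) * p.2 := by
    conv_lhs => rw [show p = p.1 • (1, 0) + p.2 • (0, 1) by simp]
    simp only [map_add, map_smul, smul_eq_mul, mul_comm]
  rw [h.charFunDual_map_eq_fun]
  simp only [hL (X _, Y _)]
  rw [integral_add (h.fst.integrable.const_mul _) (h.snd.integrable.const_mul _),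
    integral_const_mul, integral_const_mul,
    variance_fun_add (h.fst.memLp_two.const_mul _) (h.snd.memLp_two.const_mul _),
    variance_const_mul, variance_const_mul, covariance_const_mul_left, covariance_const_mul_right]

lemma map_prodMk_eq_of_hasGaussianLaw {Ω Ω' : Type*} [MeasurableSpace Ω] [MeasurableSpace Ω']
    {P : Measure Ω} {P' : Measure Ω'} {X Y : Ω → ℝ} {X' Y' : Ω' → ℝ}
    (h : HasGaussianLaw (fun ω ↦ (X ω, Y ω)) P) (h' : HasGaussianLaw (fun ω ↦ (X' ω, Y' ω)) P')
    (hX : P[X] = P'[X']) (hY : P[Y] = P'[Y']) (hVX : Var[X; P] = Var[X'; P'])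
    (hVY : Var[Y; P] = Var[Y'; P']) (hcov : cov[X, Y; P] = cov[X', Y'; P']) :
    P.map (fun ω ↦ (X ω, Y ω)) = P'.map (fun ω ↦ (X' ω, Y' ω)) := by
  have := h.isGaussian_map
  have := h'.isGaussian_map
  refine Measure.ext_of_charFunDual (funext fun L ↦ ?_)
  rw [charFunDual_map_prodMk_of_hasGaussianLaw h, charFunDual_map_prodMk_of_hasGaussianLaw h',
    hX, hY, hVX, hVY, hcov]

variable {E : Type*} [NormedAddCommGroup E] [InnerProductSpace ℝ E] [FiniteDimensional ℝ E]
  [MeasurableSpace E] [BorelSpace E]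

lemma hasGaussianLaw_inner_prodMk_stdGaussian (u v : E) :
    HasGaussianLaw (fun g ↦ (⟪u, g⟫, ⟪v, g⟫)) (stdGaussian E) :=
  IsGaussian.hasGaussianLaw_id.map_fun ((innerSL ℝ u).prod (innerSL ℝ v))

lemma integral_inner_stdGaussian (u : E) : ∫ g, ⟪u, g⟫ ∂stdGaussian E = 0 :=
  integral_strongDual_stdGaussian (innerSL ℝ u)

lemma variance_inner_stdGaussian (u : E) : Var[fun g ↦ ⟪u, g⟫; stdGaussian E] = ‖u‖ ^ 2 := by
  simpa using variance_dual_stdGaussian (innerSL ℝ u)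

lemma covariance_inner_stdGaussian (u v : E) :
    cov[fun g ↦ ⟪u, g⟫, fun g ↦ ⟪v, g⟫; stdGaussian E] = ⟪u, v⟫ := by
  rw [← covarianceBilin_apply_eq_cov IsGaussian.memLp_two_id, covarianceBilin_stdGaussian,
    innerSL_apply_apply]

lemma ae_ne_zero_stdGaussian [Nontrivial E] : ∀ᵐ g ∂stdGaussian E, g ≠ 0 := by
  obtain ⟨u, hu⟩ := exists_norm_eq E zero_le_one
  have hlaw : (stdGaussian E).map (fun g ↦ ⟪u, g⟫) = gaussianReal 0 1 := by
    rw [(hasGaussianLaw_inner_prodMk_stdGaussian u u).fst.map_eq_gaussianReal,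
      integral_inner_stdGaussian, variance_inner_stdGaussian, hu]
    simp
  have := nullSingletonClass_gaussianReal (μ := 0) one_ne_zero
  have hne : ∀ᵐ t ∂(stdGaussian E).map (fun g ↦ ⟪u, g⟫), t ≠ 0 := by
    rw [hlaw]
    exact Measure.ae_ne _ 0
  filter_upwards [ae_of_ae_map (by fun_prop) hne] with g hg hzero
  simp [hzero] at hg

lemma integral_integral_sgn_inner_stdGaussian {θ : ℝ} (hθ₀ : 0 ≤ θ) (hθ : θ ≤ π) :
    ∫ φ in 0..2 * π, ∫ z, sgn ⟪Complex.exp ((φ : ℝ) * Complex.I), z⟫ *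
      sgn ⟪Complex.exp ((φ - θ : ℝ) * Complex.I), z⟫ ∂stdGaussian ℂ = 2 * π - 4 * θ := by
  have : IsFiniteMeasure (volume.restrict (Set.uIoc 0 (2 * π))) :=
    inferInstanceAs (IsFiniteMeasure (volume.restrict (Set.Ioc _ _)))
  rw [intervalIntegral_integral_swap]
  · rw [integral_congr_ae (g := fun _ ↦ 2 * π - 4 * θ)]
    · simp
    · filter_upwards [ae_ne_zero_stdGaussian] with z hz
      exact integral_sgn_inner_mul_sgn_inner_circle hθ₀ hθ hz
  · exact integrable_sgn_mul_sgn (by fun_prop) (by fun_prop)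

lemma two_mul_abs_covariance_le {Ω : Type*} [MeasurableSpace Ω] {P : Measure Ω}
    [IsFiniteMeasure P] {X Y : Ω → ℝ} (hX : MemLp X 2 P) (hY : MemLp Y 2 P) :
    2 * |cov[X, Y; P]| ≤ Var[X; P] + Var[Y; P] := by
  have hadd := variance_nonneg (X + Y) P
  have hsub := variance_nonneg (X - Y) P
  rw [variance_add hX hY] at hadd
  rw [variance_sub hX hY] at hsub
  rcases abs_cases cov[X, Y; P] with h | h <;> linarith

lemma real_inner_exp_mul_I_exp_mul_I (φ ψ : ℝ) :
    ⟪Complex.exp (φ * Complex.I), Complex.exp (ψ * Complex.I)⟫ = cos (φ - ψ) := by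
  rw [cos_sub]
  simp [Complex.inner, Complex.exp_ofReal_mul_I_re, Complex.exp_ofReal_mul_I_im]
  ring

theorem integral_sgn_mul_sgn_of_hasGaussianLaw {Ω : Type*} [MeasurableSpace Ω] {P : Measure Ω}
    {X Y : Ω → ℝ} (h : HasGaussianLaw (fun ω ↦ (X ω, Y ω)) P) (hX : P[X] = 0) (hY : P[Y] = 0)
    (hVX : Var[X; P] = 1) (hVY : Var[Y; P] = 1) :
    ∫ ω, sgn (X ω) * sgn (Y ω) ∂P = 2 / π * arcsin cov[X, Y; P] := by
  have := h.isProbabilityMeasure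
  set θ := arccos cov[X, Y; P] with hθ
  have hcos : cos θ = cov[X, Y; P] := by
    have hcov := two_mul_abs_covariance_le h.fst.memLp_two h.snd.memLp_two
    have hcov' := abs_le.1 (show |cov[X, Y; P]| ≤ 1 by linarith)
    exact cos_arccos hcov'.1 hcov'.2
  -- The law of `(X, Y)` is that of `(⟪u, z⟫, ⟪v, z⟫)` for any unit vectors `u`, `v` of the plane at
  -- angle `θ`. Averaging over the rotations of such a pair makes the integral computable for each
  -- fixed `z ≠ 0`.
  have hplane (φ : ℝ) : ∫ ω, sgn (X ω) * sgn (Y ω) ∂P =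
      ∫ z, sgn ⟪Complex.exp (φ * Complex.I), z⟫ *
        sgn ⟪Complex.exp ((φ - θ : ℝ) * Complex.I), z⟫ ∂stdGaussian ℂ := by
    let u := Complex.exp (φ * Complex.I)
    let v := Complex.exp ((φ - θ : ℝ) * Complex.I)
    have hu : ‖u‖ = 1 := Complex.norm_exp_ofReal_mul_I φ
    have hv : ‖v‖ = 1 := Complex.norm_exp_ofReal_mul_I (φ - θ)
    have hlaw : P.map (fun ω ↦ (X ω, Y ω)) = (stdGaussian ℂ).map fun z ↦ (⟪u, z⟫, ⟪v, z⟫) :=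
      map_prodMk_eq_of_hasGaussianLaw h (hasGaussianLaw_inner_prodMk_stdGaussian u v)
        (by rw [hX, integral_inner_stdGaussian]) (by rw [hY, integral_inner_stdGaussian])
        (by rw [hVX, variance_inner_stdGaussian, hu, one_pow])
        (by rw [hVY, variance_inner_stdGaussian, hv, one_pow])
        (by rw [covariance_inner_stdGaussian, real_inner_exp_mul_I_exp_mul_I, sub_sub_cancel, hcos])
    exact (IdentDistrib.mk h.aemeasurable (by fun_prop) hlaw).comp
      (u := fun p ↦ sgn p.1 * sgn p.2) (by fun_prop) |>.integral_eq
  have haverage := integral_integral_sgn_inner_stdGaussian (arccos_nonneg _) (arccos_le_pi _)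
    (θ := θ)
  simp only [← hplane, intervalIntegral.integral_const, sub_zero, smul_eq_mul] at haverage
  have hθ' : arcsin cov[X, Y; P] = π / 2 - θ := by rw [hθ, arccos, sub_sub_cancel]
  rw [hθ']
  field_simp
  linarith

end Gaussian

section Rounding

variable {ι κ : Type*} [Fintype ι] [Fintype κ]

/-- The maximum of the bilinear form `∑ i, ∑ j, A i j * ε i * δ j` over all signs `ε`, `δ`, which is
the norm of `A` as an operator from `ℓ^∞` to `ℓ^1`. It is written as the supremum of a finite
nonempty set of reals. -/
noncomputable def signSup (A : Matrix ι κ ℝ) : ℝ :=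
  sSup {s : ℝ | ∃ (ε : ι → ℝ) (δ : κ → ℝ), (∀ i, ε i = 1 ∨ ε i = -1) ∧
    (∀ j, δ j = 1 ∨ δ j = -1) ∧ s = ∑ i, ∑ j, A i j * ε i * δ j}

lemma sum_mul_le_signSup (A : Matrix ι κ ℝ) {ε : ι → ℝ} {δ : κ → ℝ}
    (hε : ∀ i, ε i = 1 ∨ ε i = -1) (hδ : ∀ j, δ j = 1 ∨ δ j = -1) :
    ∑ i, ∑ j, A i j * ε i * δ j ≤ signSup A := by
  refine le_csSup ⟨∑ i, ∑ j, |A i j|, ?_⟩ ⟨ε, δ, hε, hδ, rfl⟩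
  rintro _ ⟨ε, δ, hε, hδ, rfl⟩
  gcongr with i _ j _
  rcases hε i with h | h <;> rcases hδ j with h' | h' <;> simp [h, h', le_abs_self, neg_le_abs]

lemma sum_integral_sgn_mul_sgn_le_signSup (A : Matrix ι κ ℝ) {Ω : Type*} [MeasurableSpace Ω]
    {P : Measure Ω} [IsProbabilityMeasure P] {X : ι → Ω → ℝ} {Y : κ → Ω → ℝ}
    (hX : ∀ i, AEMeasurable (X i) P) (hY : ∀ j, AEMeasurable (Y j) P) :
    ∑ i, ∑ j, A i j * ∫ ω, sgn (X i ω) * sgn (Y j ω) ∂P ≤ signSup A := by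
  have hint (i : ι) (j : κ) : Integrable (fun ω ↦ A i j * (sgn (X i ω) * sgn (Y j ω))) P :=
    (integrable_sgn_mul_sgn (hX i) (hY j)).const_mul _
  calc ∑ i, ∑ j, A i j * ∫ ω, sgn (X i ω) * sgn (Y j ω) ∂P
      = ∫ ω, ∑ i, ∑ j, A i j * (sgn (X i ω) * sgn (Y j ω)) ∂P := by
        rw [integral_finsetSum _ fun i _ ↦ integrable_finsetSum _ fun j _ ↦ hint i j]
        simp only [integral_finsetSum _ fun j _ ↦ hint _ j, integral_const_mul]
    _ ≤ ∫ _, signSup A ∂P := by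
        refine integral_mono (integrable_finsetSum _ fun i _ ↦ integrable_finsetSum _ fun j _ ↦
          hint i j) (integrable_const _) fun ω ↦ ?_
        simpa only [mul_assoc] using sum_mul_le_signSup A
          (fun i ↦ sgn_eq_one_or_neg_one (X i ω)) (fun j ↦ sgn_eq_one_or_neg_one (Y j ω))
    _ = signSup A := by simp

lemma integral_sgn_mul_sgn_multivariateGaussian {n : Type*} [Fintype n] [DecidableEq n]
    {S : Matrix n n ℝ} (hS : S.PosSemidef) (hdiag : ∀ p, S p p = 1) (p q : n) :
    ∫ g, sgn (g p) * sgn (g q) ∂multivariateGaussian 0 S = 2 / π * arcsin (S p q) := by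
  have hmean (p : n) : ∫ g, g p ∂multivariateGaussian 0 S = 0 := by
    simpa using (EuclideanSpace.proj (𝕜 := ℝ) p).integral_comp_id_comm
      (IsGaussian.integrable_id (μ := multivariateGaussian 0 S))
  have hvar (p : n) : Var[fun g ↦ g p; multivariateGaussian 0 S] = 1 := by
    rw [variance_eval_multivariateGaussian hS, hdiag]
  have hlaw : HasGaussianLaw (fun g ↦ (g p, g q)) (multivariateGaussian 0 S) :=
    IsGaussian.hasGaussianLaw_id.map_fun
      ((EuclideanSpace.proj (𝕜 := ℝ) p).prod (EuclideanSpace.proj q))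
  rw [integral_sgn_mul_sgn_of_hasGaussianLaw hlaw (hmean p) (hmean q) (hvar p) (hvar q),
    covariance_eval_multivariateGaussian hS]

theorem sum_mul_arcsin_le_signSup (A : Matrix ι κ ℝ) {S : Matrix (ι ⊕ κ) (ι ⊕ κ) ℝ}
    (hS : S.PosSemidef) (hdiag : ∀ p, S p p = 1) :
    ∑ i, ∑ j, A i j * arcsin (S (.inl i) (.inr j)) ≤ π / 2 * signSup A := by
  classical
  calc ∑ i, ∑ j, A i j * arcsin (S (.inl i) (.inr j))
      = π / 2 * ∑ i, ∑ j, A i j *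
          ∫ g, sgn (g (.inl i)) * sgn (g (.inr j)) ∂multivariateGaussian 0 S := by
        simp only [integral_sgn_mul_sgn_multivariateGaussian hS hdiag, Finset.mul_sum]
        field_simp
    _ ≤ π / 2 * signSup A := by
        gcongr
        exact sum_integral_sgn_mul_sgn_le_signSup A (fun i ↦ by fun_prop) fun j ↦ by fun_prop

end Rounding

lemma sinh_log_one_add_sqrt_two : sinh (log (1 + √2)) = 1 := by
  have harsinh : log (1 + √2) = arsinh 1 := by
    rw [arsinh]
    norm_num
  rw [harsinh, sinh_arsinh]

theorem grothendieck_inequality_krivine_general {ι κ E : Type*} [Fintype ι] [Fintype κ]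
    [NormedAddCommGroup E] [InnerProductSpace ℝ E] (A : Matrix ι κ ℝ) {x : ι → E} {y : κ → E}
    (hx : ∀ i, ‖x i‖ ≤ 1) (hy : ∀ j, ‖y j‖ ≤ 1) :
    ∑ i, ∑ j, A i j * ⟪x i, y j⟫ ≤ π / (2 * log (1 + √2)) * signSup A := by
  set c := log (1 + √2)
  have hc : 0 < c := log_pos (by simp)
  obtain ⟨S, hS, hdiag, harcsin⟩ :=
    exists_posSemidef_arcsin_eq hc.le sinh_log_one_add_sqrt_two.le hx hy
  calc ∑ i, ∑ j, A i j * ⟪x i, y j⟫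
      = c⁻¹ * ∑ i, ∑ j, A i j * arcsin (S (.inl i) (.inr j)) := by
        simp only [harcsin, Finset.mul_sum]
        field_simp
    _ ≤ c⁻¹ * (π / 2 * signSup A) := by
        gcongr
        exact sum_mul_arcsin_le_signSup A hS hdiag
    _ = π / (2 * c) * signSup A := by field_simp

end KrivineInequality

/-- Krivine's bound for the Grothendieck inequality: for every real `m × n` matrix `A`
and all unit vectors `x i`, `y j` in `ℝ^d`, the bilinear form evaluated on the vectors is
at most `π / (2 log(1 + √2))` times the maximum over signs. -/
theorem grothendieck_inequality_krivine
    (m n : ℕ) (A : Matrix (Fin m) (Fin n) ℝ) (d : ℕ)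
    (x : Fin m → EuclideanSpace ℝ (Fin d)) (y : Fin n → EuclideanSpace ℝ (Fin d))
    (hx : ∀ i, ‖x i‖ = 1) (hy : ∀ j, ‖y j‖ = 1) :
    ∑ i, ∑ j, A i j * (inner ℝ (x i) (y j) : ℝ) ≤
      (π / (2 * Real.log (1 + Real.sqrt 2))) *
        sSup {s : ℝ | ∃ (ε : Fin m → ℝ) (δ : Fin n → ℝ),
          (∀ i, ε i = 1 ∨ ε i = -1) ∧ (∀ j, δ j = 1 ∨ δ j = -1) ∧
          s = ∑ i, ∑ j, A i j * ε i * δ j} := by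
  exact grothendieck_inequality_krivine_general A (fun i ↦ (hx i).le) fun j ↦ (hy j).le
end

section
/- For every n ∈ ℕ, every symmetric positive semidefinite n × n real matrix A = (a_{ij}), and all unit vectors x_1, …, x_n ∈ ℝⁿ, one has ∑_{i=1}^n ∑_{j=1}^n a_{ij} ⟨x_i, x_j⟩ ≤ (π/2) · max over signs ε_1, …, ε_n ∈ {−1, 1} of ∑_{i=1}^n ∑_{j=1}^n a_{ij} ε_i ε_j. -/
open Real

/-!
Let `g` be a standard Gaussian vector and round each `xᵢ` to the random sign `sᵢ` of `⟪xᵢ, g⟫`.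
Since `E[sᵢ ⟪xⱼ, g⟫] = √(2/π) ⟪xᵢ, xⱼ⟫`, the rounding errors `rᵢ = sᵢ - √(2/π) ⟪xᵢ, g⟫` are orthogonal
to every `⟪xⱼ, g⟫`, whence `E[rᵢ rⱼ] = E[sᵢ sⱼ] - (2/π) ⟪xᵢ, xⱼ⟫`. Positivity of `A` applied to `r`
gives `(2/π) ∑ aᵢⱼ ⟪xᵢ, xⱼ⟫ ≤ E[∑ aᵢⱼ sᵢ sⱼ]`, so some value of `g` yields signs that are at least
as good as the average.
-/

open MeasureTheory ProbabilityTheory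
open scoped NNReal RealInnerProductSpace

lemma integral_Ioi_mul_exp_neg_mul_sq {b : ℝ} (hb : 0 < b) :
    ∫ t in Set.Ioi (0 : ℝ), t * exp (-b * t ^ 2) = (2 * b)⁻¹ := by
  have h := integral_rpow_mul_exp_neg_mul_rpow (p := 2) (q := 1) two_pos (by norm_num) hb
  have hexp : -(1 + 1 : ℝ) / 2 = -1 := by norm_num
  have hGamma : (1 + 1 : ℝ) / 2 = 1 := by norm_num
  simp only [rpow_one, rpow_two, hexp, hGamma, Gamma_one, rpow_neg_one] at h
  rw [h]
  field_simp

lemma integral_abs_gaussianReal (v : ℝ≥0) :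
    ∫ t, |t| ∂gaussianReal 0 v = √(2 * v / π) := by
  rcases eq_or_ne v 0 with rfl | hv
  · simp
  have : (0 : ℝ) < v := by positivity
  calc ∫ t, |t| ∂gaussianReal 0 v
      = ∫ t, (√(2 * π * v))⁻¹ * (|t| * exp (-(2 * v : ℝ)⁻¹ * |t| ^ 2)) := by
        rw [integral_gaussianReal_eq_integral_smul hv]
        refine integral_congr_ae (.of_forall fun t => ?_)
        simp only [gaussianPDFReal, smul_eq_mul, sub_zero, sq_abs]
        ring_nf
    _ = (√(2 * π * v))⁻¹ * (2 * v) := by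
        rw [integral_const_mul,
          integral_comp_abs (f := fun t : ℝ => t * exp (-(2 * v : ℝ)⁻¹ * t ^ 2)),
          integral_Ioi_mul_exp_neg_mul_sq (by positivity)]
        field_simp
    _ = √(2 * v / π) := by
        rw [eq_comm, sqrt_eq_iff_mul_self_eq (by positivity) (by positivity), ← pow_two, mul_pow,
          inv_pow, sq_sqrt (by positivity)]
        field_simp

section StdGaussian

variable {E : Type*} [NormedAddCommGroup E] [InnerProductSpace ℝ E] [FiniteDimensional ℝ E]
  [MeasurableSpace E] [BorelSpace E]

lemma stdGaussian_map_inner (y : E) :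
    (stdGaussian E).map (fun g => ⟪y, g⟫) = gaussianReal 0 (‖y‖₊ ^ 2) := by
  have h := IsGaussian.map_eq_gaussianReal (μ := stdGaussian E) (innerSL ℝ y)
  rw [integral_strongDual_stdGaussian, variance_dual_stdGaussian, innerSL_apply_norm] at h
  rwa [← coe_nnnorm, ← NNReal.coe_pow, Real.toNNReal_coe] at h

lemma measurePreserving_inner_stdGaussian {y : E} (hy : ‖y‖ = 1) :
    MeasurePreserving (fun g => ⟪y, g⟫) (stdGaussian E) (gaussianReal 0 1) where
  measurable := by fun_prop
  map_eq := by rw [stdGaussian_map_inner, show ‖y‖₊ = 1 from NNReal.eq hy, one_pow]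

lemma memLp_two_inner_stdGaussian (y : E) : MemLp (fun g => ⟪y, g⟫) 2 (stdGaussian E) :=
  IsGaussian.memLp_dual _ (innerSL ℝ y) 2 (by simp)

lemma integral_inner_mul_inner_stdGaussian (x y : E) :
    ∫ g, ⟪x, g⟫ * ⟪y, g⟫ ∂stdGaussian E = ⟪x, y⟫ := by
  have hmean : ∫ g, ⟪x, g⟫ ∂stdGaussian E = 0 := integral_strongDual_stdGaussian (innerSL ℝ x)
  have hcov := covarianceBilin_apply_eq_cov (μ := stdGaussian E) IsGaussian.memLp_two_id x y
  rw [covarianceBilin_stdGaussian, innerSL_apply_apply,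
    covariance_eq_sub (memLp_two_inner_stdGaussian x) (memLp_two_inner_stdGaussian y)] at hcov
  simpa only [hmean, zero_mul, sub_zero, Pi.mul_apply] using hcov.symm

/- The reflection in the hyperplane `zᗮ` preserves the Gaussian measure and fixes `y`, but flips the
sign of the integrand. -/
lemma integral_comp_inner_mul_inner_stdGaussian_eq_zero {y z : E} (hyz : ⟪y, z⟫ = 0) (f : ℝ → ℝ) :
    ∫ g, f ⟪y, g⟫ * ⟪z, g⟫ ∂stdGaussian E = 0 := by
  set R := (ℝ ∙ z)ᗮ.reflection
  have hRy : R y = y := Submodule.reflection_mem_subspace_eq_self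
    (Submodule.mem_orthogonal_singleton_iff_inner_left.2 hyz)
  have hRz : R z = -z := Submodule.reflection_orthogonalComplement_singleton_eq_neg z
  have hyR (g : E) : ⟪y, R g⟫ = ⟪y, g⟫ := by rw [← R.inner_map_map y g, hRy]
  have hzR (g : E) : ⟪z, R g⟫ = -⟪z, g⟫ := by
    rw [← R.inner_map_map z g, hRz, inner_neg_left, neg_neg]
  have hpres : MeasurePreserving R (stdGaussian E) (stdGaussian E) :=
    ⟨R.continuous.measurable, stdGaussian_map R⟩
  refine self_eq_neg.1 ?_
  calc ∫ g, f ⟪y, g⟫ * ⟪z, g⟫ ∂stdGaussian E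
      = ∫ g, f ⟪y, R g⟫ * ⟪z, R g⟫ ∂stdGaussian E :=
        (hpres.integral_comp R.toHomeomorph.measurableEmbedding
          fun g => f ⟪y, g⟫ * ⟪z, g⟫).symm
    _ = -∫ g, f ⟪y, g⟫ * ⟪z, g⟫ ∂stdGaussian E := by
        simp only [hyR, hzR, mul_neg, integral_neg]

lemma integral_comp_inner_mul_inner_stdGaussian {y : E} (hy : ‖y‖ = 1) (x : E) {f : ℝ → ℝ}
    (hf : MemLp f 2 (gaussianReal 0 1)) :
    ∫ g, f ⟪y, g⟫ * ⟪x, g⟫ ∂stdGaussian E = (∫ t, f t * t ∂gaussianReal 0 1) * ⟪y, x⟫ := by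
  have hlaw := measurePreserving_inner_stdGaussian hy
  have hint (u : E) : Integrable (fun g => f ⟪y, g⟫ * ⟪u, g⟫) (stdGaussian E) :=
    (hf.comp_measurePreserving hlaw).integrable_mul (memLp_two_inner_stdGaussian u)
  have horth : ⟪y, x - ⟪y, x⟫ • y⟫ = 0 := by
    rw [inner_sub_right, real_inner_smul_right, real_inner_self_eq_norm_sq, hy]
    ring
  have hparallel : ∫ g, f ⟪y, g⟫ * ⟪y, g⟫ ∂stdGaussian E = ∫ t, f t * t ∂gaussianReal 0 1 := by
    rw [← hlaw.map_eq, integral_map hlaw.measurable.aemeasurable]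
    rw [hlaw.map_eq]
    exact hf.aestronglyMeasurable.mul aestronglyMeasurable_id
  have hsplit (g : E) : f ⟪y, g⟫ * ⟪x, g⟫
      = f ⟪y, g⟫ * ⟪x - ⟪y, x⟫ • y, g⟫ + ⟪y, x⟫ * (f ⟪y, g⟫ * ⟪y, g⟫) := by
    rw [inner_sub_left, real_inner_smul_left]
    ring
  simp only [hsplit]
  rw [integral_add (hint _) ((hint y).const_mul _), integral_const_mul, hparallel,
    integral_comp_inner_mul_inner_stdGaussian_eq_zero horth, zero_add, mul_comm]

end StdGaussian

/-- The sign of a real number, valued in `{-1, 1}` and used to round Gaussian projections. Unlike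
`Real.sign` and `SignType.sign`, it sends `0` to `1`. -/
noncomputable def unitSign (t : ℝ) : ℝ := if 0 ≤ t then 1 else -1

lemma unitSign_eq_one_or_neg_one (t : ℝ) : unitSign t = 1 ∨ unitSign t = -1 :=
  ite_eq_or_eq _ _ _

lemma norm_unitSign (t : ℝ) : ‖unitSign t‖ = 1 := by
  rcases unitSign_eq_one_or_neg_one t with h | h <;> simp [h]

lemma unitSign_mul_self (t : ℝ) : unitSign t * t = |t| := by
  unfold unitSign
  split_ifs with h
  · rw [abs_of_nonneg h, one_mul]
  · rw [abs_of_neg (not_le.1 h), neg_one_mul]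

lemma measurable_unitSign : Measurable unitSign :=
  Measurable.ite measurableSet_Ici measurable_const measurable_const

lemma memLp_unitSign (p : ENNReal) (μ : Measure ℝ) [IsFiniteMeasure μ] : MemLp unitSign p μ :=
  .of_bound measurable_unitSign.aestronglyMeasurable 1 (.of_forall fun t => (norm_unitSign t).le)

section Rounding

variable {E : Type*} [NormedAddCommGroup E] [InnerProductSpace ℝ E] [FiniteDimensional ℝ E]
  [MeasurableSpace E] [BorelSpace E]

lemma memLp_two_unitSign_inner {y : E} (hy : ‖y‖ = 1) :
    MemLp (fun g => unitSign ⟪y, g⟫) 2 (stdGaussian E) :=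
  (memLp_unitSign 2 _).comp_measurePreserving (measurePreserving_inner_stdGaussian hy)

lemma integral_unitSign_inner_mul_inner {y : E} (hy : ‖y‖ = 1) (x : E) :
    ∫ g, unitSign ⟪y, g⟫ * ⟪x, g⟫ ∂stdGaussian E = √(2 / π) * ⟪y, x⟫ := by
  rw [integral_comp_inner_mul_inner_stdGaussian hy x (memLp_unitSign 2 _)]
  simp only [unitSign_mul_self, integral_abs_gaussianReal, NNReal.coe_one, mul_one]

/-- The error made when `⟪y, g⟫`, rescaled by the correlation `√(2/π)` between a standard Gaussian
and its sign, is replaced by its sign. -/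
noncomputable def roundingError (y g : E) : ℝ := unitSign ⟪y, g⟫ - √(2 / π) * ⟪y, g⟫

lemma memLp_two_roundingError {y : E} (hy : ‖y‖ = 1) :
    MemLp (roundingError y) 2 (stdGaussian E) :=
  (memLp_two_unitSign_inner hy).sub ((memLp_two_inner_stdGaussian y).const_mul _)

lemma integral_roundingError_mul_inner {y : E} (hy : ‖y‖ = 1) (x : E) :
    ∫ g, roundingError y g * ⟪x, g⟫ ∂stdGaussian E = 0 := by
  have hsx : Integrable (fun g => unitSign ⟪y, g⟫ * ⟪x, g⟫) (stdGaussian E) :=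
    (memLp_two_unitSign_inner hy).integrable_mul (memLp_two_inner_stdGaussian x)
  have hyx : Integrable (fun g => ⟪y, g⟫ * ⟪x, g⟫) (stdGaussian E) :=
    (memLp_two_inner_stdGaussian y).integrable_mul (memLp_two_inner_stdGaussian x)
  simp only [roundingError, sub_mul, mul_assoc]
  rw [integral_sub hsx (hyx.const_mul _), integral_const_mul,
    integral_unitSign_inner_mul_inner hy, integral_inner_mul_inner_stdGaussian, sub_self]

lemma integral_roundingError_mul_roundingError {x y : E} (hx : ‖x‖ = 1) (hy : ‖y‖ = 1) :
    ∫ g, roundingError x g * roundingError y g ∂stdGaussian E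
      = ∫ g, unitSign ⟪x, g⟫ * unitSign ⟪y, g⟫ ∂stdGaussian E - 2 / π * ⟪x, y⟫ := by
  have hss : Integrable (fun g => unitSign ⟪x, g⟫ * unitSign ⟪y, g⟫) (stdGaussian E) :=
    (memLp_two_unitSign_inner hx).integrable_mul (memLp_two_unitSign_inner hy)
  have hsy : Integrable (fun g => unitSign ⟪x, g⟫ * ⟪y, g⟫) (stdGaussian E) :=
    (memLp_two_unitSign_inner hx).integrable_mul (memLp_two_inner_stdGaussian y)
  have hsr : Integrable (fun g => unitSign ⟪x, g⟫ * roundingError y g) (stdGaussian E) :=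
    (memLp_two_unitSign_inner hx).integrable_mul (memLp_two_roundingError hy)
  have hrx : Integrable (fun g => roundingError y g * ⟪x, g⟫) (stdGaussian E) :=
    (memLp_two_roundingError hy).integrable_mul (memLp_two_inner_stdGaussian x)
  calc ∫ g, roundingError x g * roundingError y g ∂stdGaussian E
      = ∫ g, (unitSign ⟪x, g⟫ * roundingError y g
          - √(2 / π) * (roundingError y g * ⟪x, g⟫)) ∂stdGaussian E := by
        congr with g
        rw [roundingError]
        ring
    _ = ∫ g, unitSign ⟪x, g⟫ * roundingError y g ∂stdGaussian E := by
        rw [integral_sub hsr (hrx.const_mul _), integral_const_mul,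
          integral_roundingError_mul_inner hy, mul_zero, sub_zero]
    _ = ∫ g, (unitSign ⟪x, g⟫ * unitSign ⟪y, g⟫
          - √(2 / π) * (unitSign ⟪x, g⟫ * ⟪y, g⟫)) ∂stdGaussian E := by
        simp only [roundingError, mul_sub, mul_left_comm]
    _ = ∫ g, unitSign ⟪x, g⟫ * unitSign ⟪y, g⟫ ∂stdGaussian E - 2 / π * ⟪x, y⟫ := by
        rw [integral_sub hss (hsy.const_mul _), integral_const_mul,
          integral_unitSign_inner_mul_inner hx, ← mul_assoc, mul_self_sqrt (by positivity)]

end Rounding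

section RandomQuadraticForm

variable {ι Ω : Type*} [Fintype ι] [MeasurableSpace Ω] {μ : Measure Ω} {X : ι → Ω → ℝ}

lemma integrable_sum_sum_mul_mul (A : Matrix ι ι ℝ) (hX : ∀ i, MemLp (X i) 2 μ) :
    Integrable (fun ω => ∑ i, ∑ j, A i j * X i ω * X j ω) μ :=
  integrable_finsetSum _ fun i _ => integrable_finsetSum _ fun j _ =>
    ((hX i).const_mul (A i j)).integrable_mul (hX j)

lemma integral_sum_sum_mul_mul (A : Matrix ι ι ℝ) (hX : ∀ i, MemLp (X i) 2 μ) :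
    ∫ ω, ∑ i, ∑ j, A i j * X i ω * X j ω ∂μ = ∑ i, ∑ j, A i j * ∫ ω, X i ω * X j ω ∂μ := by
  have hint (i j : ι) : Integrable (fun ω => A i j * X i ω * X j ω) μ :=
    ((hX i).const_mul (A i j)).integrable_mul (hX j)
  rw [integral_finsetSum _ fun i _ => integrable_finsetSum _ fun j _ => hint i j]
  refine Finset.sum_congr rfl fun i _ => ?_
  rw [integral_finsetSum _ fun j _ => hint i j]
  simp only [mul_assoc, integral_const_mul]

end RandomQuadraticForm

section Grothendieck

variable {ι : Type*} [Fintype ι] {E : Type*} [NormedAddCommGroup E] [InnerProductSpace ℝ E]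

lemma sum_inner_le_integral_unitSign [FiniteDimensional ℝ E] [MeasurableSpace E] [BorelSpace E]
    (A : Matrix ι ι ℝ) (hpsd : ∀ t : ι → ℝ, 0 ≤ ∑ i, ∑ j, A i j * t i * t j)
    (x : ι → E) (hx : ∀ i, ‖x i‖ = 1) :
    2 / π * ∑ i, ∑ j, A i j * ⟪x i, x j⟫
      ≤ ∫ g, ∑ i, ∑ j, A i j * unitSign ⟪x i, g⟫ * unitSign ⟪x j, g⟫ ∂stdGaussian E := by
  rw [← sub_nonneg]
  calc 0 ≤ ∫ g, ∑ i, ∑ j, A i j * roundingError (x i) g * roundingError (x j) g ∂stdGaussian E :=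
        integral_nonneg fun g => hpsd fun i => roundingError (x i) g
    _ = ∑ i, ∑ j, A i j * (∫ g, unitSign ⟪x i, g⟫ * unitSign ⟪x j, g⟫ ∂stdGaussian E
          - 2 / π * ⟪x i, x j⟫) := by
        rw [integral_sum_sum_mul_mul A fun i => memLp_two_roundingError (hx i)]
        simp only [integral_roundingError_mul_roundingError (hx _) (hx _)]
    _ = _ := by
        rw [integral_sum_sum_mul_mul A fun i => memLp_two_unitSign_inner (hx i)]
        simp only [mul_sub, Finset.sum_sub_distrib, Finset.mul_sum, mul_left_comm]

lemma exists_signs_sum_inner_le_of_finiteDimensional [FiniteDimensional ℝ E] (A : Matrix ι ι ℝ)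
    (hpsd : ∀ t : ι → ℝ, 0 ≤ ∑ i, ∑ j, A i j * t i * t j)
    (x : ι → E) (hx : ∀ i, ‖x i‖ = 1) :
    ∃ ε : ι → ℝ, (∀ i, ε i = 1 ∨ ε i = -1) ∧
      ∑ i, ∑ j, A i j * ⟪x i, x j⟫ ≤ π / 2 * ∑ i, ∑ j, A i j * ε i * ε j := by
  borelize E
  obtain ⟨g, hg⟩ := exists_integral_le
    (integrable_sum_sum_mul_mul A fun i => memLp_two_unitSign_inner (hx i))
  refine ⟨fun i => unitSign ⟪x i, g⟫, fun i => unitSign_eq_one_or_neg_one _, ?_⟩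
  calc ∑ i, ∑ j, A i j * ⟪x i, x j⟫
      = π / 2 * (2 / π * ∑ i, ∑ j, A i j * ⟪x i, x j⟫) := by field_simp
    _ ≤ π / 2 * ∑ i, ∑ j, A i j * unitSign ⟪x i, g⟫ * unitSign ⟪x j, g⟫ := by
        gcongr
        exact (sum_inner_le_integral_unitSign A hpsd x hx).trans hg

lemma exists_signs_sum_inner_le (A : Matrix ι ι ℝ)
    (hpsd : ∀ t : ι → ℝ, 0 ≤ ∑ i, ∑ j, A i j * t i * t j)
    (x : ι → E) (hx : ∀ i, ‖x i‖ = 1) :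
    ∃ ε : ι → ℝ, (∀ i, ε i = 1 ∨ ε i = -1) ∧
      ∑ i, ∑ j, A i j * ⟪x i, x j⟫ ≤ π / 2 * ∑ i, ∑ j, A i j * ε i * ε j :=
  have := FiniteDimensional.span_of_finite ℝ (Set.finite_range x)
  exists_signs_sum_inner_le_of_finiteDimensional A hpsd
    (fun i => (⟨x i, Submodule.subset_span (Set.mem_range_self i)⟩ :
      Submodule.span ℝ (Set.range x))) hx

lemma finite_setOf_sum_sum_mul_signs (A : Matrix ι ι ℝ) :
    {s : ℝ | ∃ ε : ι → ℝ, (∀ i, ε i = 1 ∨ ε i = -1) ∧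
      s = ∑ i, ∑ j, A i j * ε i * ε j}.Finite := by
  have hsigns : {ε : ι → ℝ | ∀ i, ε i = 1 ∨ ε i = -1}.Finite :=
    Set.Finite.pi' fun _ => Set.toFinite {1, -1}
  refine (hsigns.image fun ε => ∑ i, ∑ j, A i j * ε i * ε j).subset ?_
  rintro _ ⟨ε, hε, rfl⟩
  exact ⟨ε, hε, rfl⟩

theorem psd_grothendieck_inequality_general (A : Matrix ι ι ℝ)
    (hpsd : ∀ t : ι → ℝ, 0 ≤ ∑ i, ∑ j, A i j * t i * t j)
    (x : ι → E) (hx : ∀ i, ‖x i‖ = 1) :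
    ∑ i, ∑ j, A i j * ⟪x i, x j⟫ ≤
      (π / 2) * sSup {s : ℝ | ∃ ε : ι → ℝ, (∀ i, ε i = 1 ∨ ε i = -1) ∧
        s = ∑ i, ∑ j, A i j * ε i * ε j} := by
  obtain ⟨ε, hε, hle⟩ := exists_signs_sum_inner_le A hpsd x hx
  refine hle.trans ?_
  gcongr
  exact le_csSup (finite_setOf_sum_sum_mul_signs A).bddAbove ⟨ε, hε, rfl⟩

end Grothendieck

/-- The positive semidefinite Grothendieck inequality with the sharp constant `π/2`:
for every symmetric positive semidefinite `n × n` real matrix `A` and all unit vectors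
`x₁, …, xₙ ∈ ℝⁿ`, the vector quadratic form is at most `(π/2)` times the maximum over
signs `ε ∈ {−1,1}ⁿ` of the quadratic form. -/
theorem psd_grothendieck_inequality {n : ℕ} (A : Matrix (Fin n) (Fin n) ℝ)
    (hsymm : ∀ i j, A i j = A j i)
    (hpsd : ∀ t : Fin n → ℝ, 0 ≤ ∑ i, ∑ j, A i j * t i * t j)
    (x : Fin n → EuclideanSpace ℝ (Fin n)) (hx : ∀ i, ‖x i‖ = 1) :
    ∑ i, ∑ j, A i j * (inner ℝ (x i) (x j) : ℝ) ≤
      (π / 2) * sSup {s : ℝ | ∃ ε : Fin n → ℝ, (∀ i, ε i = 1 ∨ ε i = -1) ∧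
        s = ∑ i, ∑ j, A i j * ε i * ε j} :=
  psd_grothendieck_inequality_general A hpsd x hx
end

section
/- Fix p ∈ [2, ∞) and let γ_p = √2 · (Γ((p+1)/2)/√π)^{1/p}, i.e., γ_p = (E|G|^p)^{1/p} where G is a standard Gaussian random variable. Then for every n × n real matrix A = (a_{ij}) and all vectors x_1, …, x_n ∈ ℝⁿ satisfying ∑_{k=1}^n ‖x_k‖₂^p ≤ 1, one has ∑_{i=1}^n ∑_{j=1}^n a_{ij} ⟨x_i, x_j⟩ ≤ γ_p² · max{∑_{i=1}^n ∑_{j=1}^n a_{ij} t_i t_j : t ∈ ℝⁿ, ∑_{k=1}^n |t_k|^p ≤ 1}. -/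
open Real

/-! Let `g` be the centered Gaussian vector whose covariance matrix is the Gram matrix of `x`. Then
`⟨xᵢ, xⱼ⟩ = E[gᵢ gⱼ]`, so the left-hand side is the expectation of the quadratic form of `A` at `g`.
By homogeneity this form is pointwise at most `(∑ₖ |gₖ|ᵖ) ^ (2/p)` times its maximum over the `ℓᵖ`
ball. Since `2/p ≤ 1`, Jensen's inequality bounds the expectation of that factor by
`(∑ₖ E|gₖ|ᵖ) ^ (2/p) = γₚ² (∑ₖ ‖xₖ‖ᵖ) ^ (2/p)`. -/

open MeasureTheory ProbabilityTheory

section Jensen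

variable {Ω : Type*} [MeasurableSpace Ω] {μ : Measure Ω} {f : Ω → ℝ} {q : ℝ}

lemma integrable_rpow_of_le_one [IsFiniteMeasure μ] (hf : Integrable f μ) (hf0 : 0 ≤ᵐ[μ] f)
    (hq0 : 0 ≤ q) (hq1 : q ≤ 1) : Integrable (fun ω => f ω ^ q) μ := by
  refine (hf.add (integrable_const 1)).mono' (hf.aemeasurable.pow_const q).aestronglyMeasurable ?_
  filter_upwards [hf0] with ω (hω : 0 ≤ f ω)
  rw [Real.norm_of_nonneg (rpow_nonneg hω q), Pi.add_apply]
  rcases le_total (f ω) 1 with h | h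
  · linarith [rpow_le_one hω h hq0]
  · linarith [rpow_le_self_of_one_le h hq1]

lemma integral_rpow_le_rpow_integral [IsProbabilityMeasure μ] (hf : Integrable f μ)
    (hf0 : 0 ≤ᵐ[μ] f) (hq0 : 0 ≤ q) (hq1 : q ≤ 1) :
    ∫ ω, f ω ^ q ∂μ ≤ (∫ ω, f ω ∂μ) ^ q :=
  (concaveOn_rpow hq0 hq1).le_map_integral (continuous_rpow_const hq0).continuousOn isClosed_Ici
    hf0 hf (integrable_rpow_of_le_one hf hf0 hq0 hq1)

end Jensen

section GaussianMoments

lemma integral_abs_rpow_stdGaussianReal {p : ℝ} (hp : -1 < p) :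
    ∫ t, |t| ^ p ∂(gaussianReal 0 1) = 2 ^ (p / 2) * (Gamma ((p + 1) / 2) / √π) := by
  have density_eq (t : ℝ) : gaussianPDFReal 0 1 t • |t| ^ p =
      (√(2 * π))⁻¹ * (|t| ^ p * rexp (-(1 / 2) * |t| ^ (2 : ℝ))) := by
    simp only [gaussianPDFReal, smul_eq_mul, NNReal.coe_one, mul_one, sub_zero, rpow_two, sq_abs]
    ring_nf
  have two_rpow : (1 / 2 : ℝ) ^ (-(p + 1) / 2) = 2 ^ (p / 2) * √2 := by
    rw [one_div, inv_rpow zero_le_two, ← rpow_neg zero_le_two, sqrt_eq_rpow,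
      ← rpow_add zero_lt_two]
    ring_nf
  simp_rw [integral_gaussianReal_eq_integral_smul one_ne_zero, density_eq]
  rw [integral_comp_abs (f := fun s => (√(2 * π))⁻¹ * (s ^ p * rexp (-(1 / 2) * s ^ (2 : ℝ)))),
    integral_const_mul,
    integral_rpow_mul_exp_neg_mul_rpow zero_lt_two hp one_half_pos, two_rpow,
    sqrt_mul zero_le_two]
  field_simp

/-- The `Lᵖ` norm `(E|G|ᵖ)^(1/p)` of a standard Gaussian random variable `G`: the constant `γₚ`
of the `Lₚ` Grothendieck inequality. -/
noncomputable def gaussianLpNorm (p : ℝ) : ℝ :=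
  (∫ t, |t| ^ p ∂(gaussianReal 0 1)) ^ (1 / p)

lemma gaussianLpNorm_nonneg (p : ℝ) : 0 ≤ gaussianLpNorm p :=
  rpow_nonneg (integral_nonneg fun _ => by positivity) _

lemma gaussianLpNorm_rpow_self {p : ℝ} (hp : p ≠ 0) :
    gaussianLpNorm p ^ p = ∫ t, |t| ^ p ∂(gaussianReal 0 1) := by
  rw [gaussianLpNorm, one_div, rpow_inv_rpow (integral_nonneg fun _ => by positivity) hp]

lemma gaussianLpNorm_eq_sqrt_two_mul {p : ℝ} (hp : -1 < p) (hp0 : p ≠ 0) :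
    gaussianLpNorm p = √2 * (Gamma ((p + 1) / 2) / √π) ^ (1 / p) := by
  have : 0 < Gamma ((p + 1) / 2) := Gamma_pos_of_pos (by linarith)
  rw [gaussianLpNorm, integral_abs_rpow_stdGaussianReal hp,
    mul_rpow (by positivity) (by positivity), ← rpow_mul zero_le_two, sqrt_eq_rpow 2,
    show p / 2 * (1 / p) = 1 / 2 by field_simp]

lemma integral_abs_rpow_gaussianReal {p : ℝ} (hp : p ≠ 0) (v : NNReal) :
    ∫ t, |t| ^ p ∂(gaussianReal 0 v) = gaussianLpNorm p ^ p * √v ^ p := by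
  have map_eq : gaussianReal 0 v = (gaussianReal 0 1).map (√v * ·) := by
    rw [gaussianReal_map_const_mul]
    congr 1
    · simp
    · ext; simp
  rw [map_eq, integral_map (by fun_prop) (Measurable.aestronglyMeasurable (by fun_prop)),
    gaussianLpNorm_rpow_self hp, ← integral_mul_const]
  simp only [abs_mul, abs_of_nonneg (sqrt_nonneg (v : ℝ)),
    mul_rpow (sqrt_nonneg (v : ℝ)) (abs_nonneg _), mul_comm (√(v : ℝ) ^ p)]

end GaussianMoments

section CenteredGaussianVector

variable {ι : Type*} [Fintype ι] [DecidableEq ι] {S : Matrix ι ι ℝ}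

lemma memLp_eval_multivariateGaussian (hS : S.PosSemidef) (i : ι) (q : NNReal) :
    MemLp (fun g => g i) q (multivariateGaussian 0 S) :=
  (memLp_id_gaussianReal q).comp_measurePreserving
    (measurePreserving_eval_multivariateGaussian hS (i := i))

lemma integral_comp_eval_multivariateGaussian (hS : S.PosSemidef) (i : ι) {f : ℝ → ℝ}
    (hf : Measurable f) :
    ∫ g, f (g i) ∂(multivariateGaussian 0 S) = ∫ t, f t ∂(gaussianReal 0 (S i i).toNNReal) := by
  have h := measurePreserving_eval_multivariateGaussian (μ := 0) hS (i := i)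
  rw [← integral_map h.measurable.aemeasurable hf.aestronglyMeasurable, h.map_eq]
  rfl

lemma integral_mul_eval_multivariateGaussian (hS : S.PosSemidef) (i j : ι) :
    ∫ g, g i * g j ∂(multivariateGaussian 0 S) = S i j := by
  have mean_eq_zero (k : ι) : ∫ g, g k ∂(multivariateGaussian 0 S) = 0 :=
    (integral_comp_eval_multivariateGaussian hS k measurable_id).trans integral_id_gaussianReal
  simpa only [covariance, mean_eq_zero, sub_zero] using
    covariance_eval_multivariateGaussian (μ := 0) hS i j

lemma integral_abs_rpow_eval_multivariateGaussian {p : ℝ} (hp : p ≠ 0) (hS : S.PosSemidef)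
    (i : ι) :
    ∫ g, |g i| ^ p ∂(multivariateGaussian 0 S) = gaussianLpNorm p ^ p * √(S i i) ^ p := by
  rw [integral_comp_eval_multivariateGaussian hS i (f := fun t => |t| ^ p) (by fun_prop),
    integral_abs_rpow_gaussianReal hp, coe_toNNReal _ hS.diag_nonneg]

end CenteredGaussianVector

section LpBall

variable {ι : Type*} [Fintype ι]

/-- The supremum of the quadratic form of `A` over the unit ball of `ℓᵖ`. For `p > 0` the values
are bounded and include `0`, so `sSup` does not take a junk value. -/
noncomputable def quadFormLpSup (p : ℝ) (A : Matrix ι ι ℝ) : ℝ :=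
  sSup {s : ℝ | ∃ t : ι → ℝ, (∑ k, |t k| ^ p) ≤ 1 ∧ s = ∑ i, ∑ j, A i j * t i * t j}

variable {p : ℝ} (A : Matrix ι ι ℝ)

lemma abs_le_one_of_sum_abs_rpow_le_one (hp : 0 < p) {t : ι → ℝ} (ht : ∑ k, |t k| ^ p ≤ 1)
    (k : ι) : |t k| ≤ 1 := by
  have h : |t k| ^ p ≤ 1 :=
    (Finset.single_le_sum (f := fun k => |t k| ^ p) (fun _ _ => by positivity)
      (Finset.mem_univ k)).trans ht
  rwa [← one_rpow p, rpow_le_rpow_iff (abs_nonneg _) zero_le_one hp] at h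

lemma sum_mul_mul_le_sum_abs {t : ι → ℝ} (ht : ∀ k, |t k| ≤ 1) :
    ∑ i, ∑ j, A i j * t i * t j ≤ ∑ i, ∑ j, |A i j| := by
  refine Finset.sum_le_sum fun i _ => Finset.sum_le_sum fun j _ => (le_abs_self _).trans ?_
  rw [abs_mul, abs_mul, mul_assoc]
  exact mul_le_of_le_one_right (abs_nonneg _) (mul_le_one₀ (ht i) (abs_nonneg _) (ht j))

lemma le_quadFormLpSup (hp : 0 < p) {t : ι → ℝ} (ht : ∑ k, |t k| ^ p ≤ 1) :
    ∑ i, ∑ j, A i j * t i * t j ≤ quadFormLpSup p A := by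
  refine le_csSup ⟨∑ i, ∑ j, |A i j|, ?_⟩ ⟨t, ht, rfl⟩
  rintro _ ⟨u, hu, rfl⟩
  exact sum_mul_mul_le_sum_abs A (abs_le_one_of_sum_abs_rpow_le_one hp hu)

lemma quadFormLpSup_nonneg (hp : 0 < p) : 0 ≤ quadFormLpSup p A := by
  simpa using le_quadFormLpSup A hp (t := 0) (by simp [zero_rpow hp.ne'])

lemma le_quadFormLpSup_mul (hp : 0 < p) (t : ι → ℝ) :
    ∑ i, ∑ j, A i j * t i * t j ≤ quadFormLpSup p A * (∑ k, |t k| ^ p) ^ (2 / p) := by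
  have hS : 0 ≤ ∑ k, |t k| ^ p := Finset.sum_nonneg fun _ _ => by positivity
  rcases hS.eq_or_lt' with hS0 | hSpos
  · have ht (k : ι) : t k = 0 := by
      have := (Finset.sum_eq_zero_iff_of_nonneg fun _ _ => by positivity).1 hS0 k
        (Finset.mem_univ k)
      rwa [rpow_eq_zero (abs_nonneg _) hp.ne', abs_eq_zero] at this
    simp [ht, zero_rpow hp.ne', hp.ne']
  · obtain ⟨c, hc, hcp, hc2⟩ : ∃ c : ℝ, 0 < c ∧ c ^ p = ∑ k, |t k| ^ p ∧
        (∑ k, |t k| ^ p) ^ (2 / p) = c ^ 2 := by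
      refine ⟨(∑ k, |t k| ^ p) ^ p⁻¹, rpow_pos_of_pos hSpos _, rpow_inv_rpow hS hp.ne', ?_⟩
      rw [← rpow_mul_natCast hS, Nat.cast_ofNat, mul_comm, div_eq_mul_inv]
    have normalized : ∑ k, |t k / c| ^ p ≤ 1 := by
      simp_rw [abs_div, abs_of_pos hc, div_rpow (abs_nonneg _) hc.le]
      rw [← Finset.sum_div, hcp, div_self hSpos.ne']
    have homogeneous : ∑ i, ∑ j, A i j * (t i / c) * (t j / c) =
        (∑ i, ∑ j, A i j * t i * t j) / c ^ 2 := by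
      simp_rw [Finset.sum_div]
      refine Finset.sum_congr rfl fun i _ => Finset.sum_congr rfl fun j _ => ?_
      field_simp
    rw [hc2, ← div_le_iff₀ (by positivity), ← homogeneous]
    exact le_quadFormLpSup A hp normalized

end LpBall

lemma sum_mul_integral_mul_le {ι Ω : Type*} [Fintype ι] [MeasurableSpace Ω] {μ : Measure Ω}
    [IsProbabilityMeasure μ] {p : ℝ} (hp : 2 ≤ p) (A : Matrix ι ι ℝ) {g : ι → Ω → ℝ}
    (hg : ∀ k, MemLp (g k) (ENNReal.ofReal p) μ) :
    ∑ i, ∑ j, A i j * ∫ ω, g i ω * g j ω ∂μ ≤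
      quadFormLpSup p A * (∑ k, ∫ ω, |g k ω| ^ p ∂μ) ^ (2 / p) := by
  have hp0 : 0 < p := by linarith
  have hq1 : 2 / p ≤ 1 := (div_le_one hp0).2 hp
  have hg2 (k : ι) : MemLp (g k) 2 μ :=
    (hg k).mono_exponent (by simpa using ENNReal.ofReal_le_ofReal hp)
  have hgp (k : ι) : Integrable (fun ω => |g k ω| ^ p) μ := by
    simpa [ENNReal.toReal_ofReal hp0.le] using
      (hg k).integrable_norm_rpow (by simpa using hp0) ENNReal.ofReal_ne_top
  have hgg (i j : ι) : Integrable (fun ω => A i j * g i ω * g j ω) μ := by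
    simpa only [mul_assoc, Pi.mul_apply] using ((hg2 i).integrable_mul (hg2 j)).const_mul (A i j)
  have hsum : Integrable (fun ω => ∑ k, |g k ω| ^ p) μ := integrable_finsetSum _ fun k _ => hgp k
  have hsum0 : 0 ≤ᵐ[μ] fun ω => ∑ k, |g k ω| ^ p :=
    .of_forall fun ω => Finset.sum_nonneg fun _ _ => by positivity
  calc ∑ i, ∑ j, A i j * ∫ ω, g i ω * g j ω ∂μ
      = ∫ ω, ∑ i, ∑ j, A i j * g i ω * g j ω ∂μ := by
        rw [integral_finsetSum _ fun i _ => integrable_finsetSum _ fun j _ => hgg i j]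
        simp_rw [integral_finsetSum _ fun j _ => hgg _ j, mul_assoc, integral_const_mul]
    _ ≤ ∫ ω, quadFormLpSup p A * (∑ k, |g k ω| ^ p) ^ (2 / p) ∂μ :=
        integral_mono (integrable_finsetSum _ fun i _ => integrable_finsetSum _ fun j _ => hgg i j)
          ((integrable_rpow_of_le_one hsum hsum0 (by positivity) hq1).const_mul _)
          fun ω => le_quadFormLpSup_mul A hp0 fun k => g k ω
    _ = quadFormLpSup p A * ∫ ω, (∑ k, |g k ω| ^ p) ^ (2 / p) ∂μ := integral_const_mul _ _
    _ ≤ quadFormLpSup p A * (∑ k, ∫ ω, |g k ω| ^ p ∂μ) ^ (2 / p) := by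
        rw [← integral_finsetSum _ fun k _ => hgp k]
        exact mul_le_mul_of_nonneg_left
          (integral_rpow_le_rpow_integral hsum hsum0 (by positivity) hq1)
          (quadFormLpSup_nonneg A hp0)

theorem lp_grothendieck_inequality_general {ι E : Type*} [Fintype ι] [NormedAddCommGroup E]
    [InnerProductSpace ℝ E] {p : ℝ} (hp : 2 ≤ p) (A : Matrix ι ι ℝ) (x : ι → E)
    (hx : ∑ k, ‖x k‖ ^ p ≤ 1) :
    ∑ i, ∑ j, A i j * inner ℝ (x i) (x j) ≤ gaussianLpNorm p ^ 2 * quadFormLpSup p A := by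
  classical
  have hp0 : 0 < p := by linarith
  have hS := Matrix.posSemidef_gram ℝ x
  have moment (k : ι) : ∫ g, |g k| ^ p ∂(multivariateGaussian 0 (Matrix.gram ℝ x)) =
      gaussianLpNorm p ^ p * ‖x k‖ ^ p := by
    rw [integral_abs_rpow_eval_multivariateGaussian hp0.ne' hS, Matrix.gram_apply,
      norm_eq_sqrt_real_inner]
  have hγ : 0 ≤ gaussianLpNorm p ^ p := rpow_nonneg (gaussianLpNorm_nonneg p) p
  calc ∑ i, ∑ j, A i j * inner ℝ (x i) (x j)
      = ∑ i, ∑ j, A i j * ∫ g, g i * g j ∂(multivariateGaussian 0 (Matrix.gram ℝ x)) := by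
        simp only [integral_mul_eval_multivariateGaussian hS, Matrix.gram_apply]
    _ ≤ quadFormLpSup p A * (gaussianLpNorm p ^ p * ∑ k, ‖x k‖ ^ p) ^ (2 / p) := by
        simpa only [moment, ← Finset.mul_sum] using
          sum_mul_integral_mul_le hp A fun k => memLp_eval_multivariateGaussian hS k p.toNNReal
    _ ≤ quadFormLpSup p A * (gaussianLpNorm p ^ p) ^ (2 / p) := by
        gcongr
        · exact quadFormLpSup_nonneg A hp0
        · exact mul_le_of_le_one_right hγ hx
    _ = gaussianLpNorm p ^ 2 * quadFormLpSup p A := by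
        rw [← rpow_mul (gaussianLpNorm_nonneg p), mul_div_cancel₀ _ hp0.ne', rpow_two, mul_comm]

/-- The `L_p` Grothendieck inequality for `p ∈ [2, ∞)`, with the sharp constant
`γ_p² = (E|G|^p)^{2/p}` where `G` is a standard Gaussian:
`γ_p = √2 (Γ((p+1)/2)/√π)^{1/p}`. -/
theorem lp_grothendieck_inequality {n : ℕ} (p : ℝ) (hp : 2 ≤ p)
    (γ : ℝ) (hγ : γ = Real.sqrt 2 * (Real.Gamma ((p + 1) / 2) / Real.sqrt π) ^ (1 / p))
    (A : Matrix (Fin n) (Fin n) ℝ)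
    (x : Fin n → EuclideanSpace ℝ (Fin n)) (hx : ∑ k, ‖x k‖ ^ p ≤ 1) :
    ∑ i, ∑ j, A i j * (inner ℝ (x i) (x j) : ℝ) ≤
      γ ^ 2 * sSup {s : ℝ | ∃ t : Fin n → ℝ, (∑ k, |t k| ^ p) ≤ 1 ∧
        s = ∑ i, ∑ j, A i j * t i * t j} := by
  rw [hγ, ← gaussianLpNorm_eq_sqrt_two_mul (by linarith) (by linarith)]
  exact lp_grothendieck_inequality_general hp A x hx
end

section
/- Fix p ∈ [1, 2]. Then for every n × n real matrix A = (a_{ij}), the maximum of ∑_{i=1}^n ∑_{j=1}^n a_{ij} ⟨x_i, x_j⟩ over all x_1, …, x_n ∈ ℝⁿ with ∑_{k=1}^n ‖x_k‖₂^p ≤ 1 equals the maximum of ∑_{i=1}^n ∑_{j=1}^n a_{ij} t_i t_j over all t ∈ ℝⁿ with ∑_{k=1}^n |t_k|^p ≤ 1. -/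
/-!
Expanding `x₁, …, xₙ` in an orthonormal basis splits the vector form into scalar forms, one for
each coordinate `l`. As `2 / p ≥ 1`, Minkowski's inequality shows that the squared `ℓᵖ` norms of the
coordinate sequences add up to at most `1`. So some coordinate sequence carries a share `f l > 0` of
the total value that is at least its squared norm `g l`, and dividing that sequence by `√(f l)`
gives a feasible scalar point with exactly the same value. Hence the two problems have the same set
of values, not only the same maximum.
-/

open Finset

variable {ι κ : Type*}

section RealSums

theorem Lp_sum_le_sum_Lp_of_nonneg (s : Finset ι) (t : Finset κ) {q : ℝ} (hq : 1 ≤ q)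
    {f : ι → κ → ℝ} (hf : ∀ i ∈ s, ∀ j ∈ t, 0 ≤ f i j) :
    (∑ j ∈ t, (∑ i ∈ s, f i j) ^ q) ^ (1 / q) ≤ ∑ i ∈ s, (∑ j ∈ t, f i j ^ q) ^ (1 / q) := by
  have hq_pos : 0 < q := by positivity
  have h := le_sum_of_subadditive_on_pred (fun v : κ → ℝ ↦ (∑ j ∈ t, v j ^ q) ^ (1 / q))
    (fun v ↦ ∀ j ∈ t, 0 ≤ v j) (by simp [Real.zero_rpow, hq_pos.ne'])
    (fun v w hv hw ↦ Real.Lp_add_le_of_nonneg t hq hv hw)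
    (fun v w hv hw j hj ↦ add_nonneg (hv j hj) (hw j hj)) f hf
  simpa only [Finset.sum_apply] using h

theorem exists_pos_and_le_of_sum_le_sum {s : Finset κ} {f g : κ → ℝ} (hg : ∀ l ∈ s, 0 ≤ g l)
    (hgf : ∑ l ∈ s, g l ≤ ∑ l ∈ s, f l) (hf : 0 < ∑ l ∈ s, f l) :
    ∃ l ∈ s, 0 < f l ∧ g l ≤ f l := by
  by_contra! hlt
  obtain ⟨l, hls, hl⟩ : ∃ l ∈ s, 0 < f l := exists_lt_of_sum_lt (by simpa using hf)
  have hle : ∀ m ∈ s, f m ≤ g m := fun m hm ↦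
    (le_or_gt (f m) 0).elim (·.trans (hg m hm)) fun hpos ↦ (hlt m hm hpos).le
  exact hgf.not_gt (sum_lt_sum hle ⟨l, hls, hlt l hls hl⟩)

theorem sum_abs_div_sqrt_rpow_le_one {s : Finset ι} {p c : ℝ} (hp : 0 < p) (hc : 0 < c)
    {t : ι → ℝ} (ht : (∑ k ∈ s, |t k| ^ p) ^ (2 / p) ≤ c) : ∑ k ∈ s, |t k / √c| ^ p ≤ 1 := by
  have hsum : ∑ k ∈ s, |t k| ^ p ≤ √c ^ p := by
    rwa [← inv_div, Real.rpow_inv_le_iff_of_pos (by positivity) hc.le (by positivity),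
      Real.rpow_div_two_eq_sqrt p hc.le] at ht
  calc ∑ k ∈ s, |t k / √c| ^ p = (∑ k ∈ s, |t k| ^ p) / √c ^ p := by
        simp_rw [sum_div, abs_div, abs_of_nonneg (Real.sqrt_nonneg c),
          Real.div_rpow (abs_nonneg _) (Real.sqrt_nonneg c)]
    _ ≤ 1 := div_le_one_of_le₀ hsum (by positivity)

theorem sum_sum_mul_div_sqrt [Fintype ι] {c : ℝ} (hc : 0 ≤ c) (A : Matrix ι ι ℝ) (t : ι → ℝ) :
    ∑ i, ∑ j, A i j * (t i / √c) * (t j / √c) = (∑ i, ∑ j, A i j * t i * t j) / c := by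
  simp_rw [sum_div, ← mul_div_assoc, div_mul_eq_mul_div, div_div, Real.mul_self_sqrt hc]

end RealSums

section InnerProductSpace

variable [Fintype ι] {E : Type*} [NormedAddCommGroup E] [InnerProductSpace ℝ E]

theorem sum_sum_mul_inner_eq_sum_coord [Fintype κ] (b : OrthonormalBasis κ ℝ E) (A : Matrix ι ι ℝ)
    (x : ι → E) :
    ∑ i, ∑ j, A i j * inner ℝ (x i) (x j) =
      ∑ l, ∑ i, ∑ j, A i j * inner ℝ (b l) (x i) * inner ℝ (b l) (x j) := by
  have hentry (i j : ι) : A i j * inner ℝ (x i) (x j) =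
      ∑ l, A i j * inner ℝ (b l) (x i) * inner ℝ (b l) (x j) := by
    simp_rw [← b.sum_inner_mul_inner (x i) (x j), mul_sum, real_inner_comm (b _) (x i), mul_assoc]
  simp_rw [hentry, sum_comm (t := (univ : Finset κ))]

theorem sum_rpow_sum_abs_coord_rpow_le [Fintype κ] (b : OrthonormalBasis κ ℝ E) {p : ℝ} (hp : 0 < p)
    (hp2 : p ≤ 2) (x : ι → E) :
    ∑ l, (∑ k, |inner ℝ (b l) (x k)| ^ p) ^ (2 / p) ≤ (∑ k, ‖x k‖ ^ p) ^ (2 / p) := by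
  have hsq (k : ι) (l : κ) :
      (|inner ℝ (b l) (x k)| ^ p) ^ (2 / p) = ‖inner ℝ (b l) (x k)‖ ^ 2 := by
    rw [← Real.rpow_mul (abs_nonneg _), mul_div_cancel₀ _ hp.ne', Real.rpow_two, Real.norm_eq_abs]
  have hnorm (k : ι) : (∑ l, (|inner ℝ (b l) (x k)| ^ p) ^ (2 / p)) ^ (p / 2) = ‖x k‖ ^ p := by
    rw [sum_congr rfl fun l _ ↦ hsq k l, b.sum_sq_norm_inner_right,
      Real.rpow_div_two_eq_sqrt p (sq_nonneg _), Real.sqrt_sq (norm_nonneg _)]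
  have hmink := Lp_sum_le_sum_Lp_of_nonneg univ univ ((one_le_div hp).2 hp2)
    fun k _ l _ ↦ Real.rpow_nonneg (abs_nonneg (inner ℝ (b l) (x k))) p
  simp_rw [one_div_div, hnorm] at hmink
  rwa [← inv_div p 2, Real.le_rpow_inv_iff_of_pos (by positivity) (by positivity) (by positivity),
    inv_div]

theorem exists_scalar_value_eq_of_orthonormalBasis [Fintype κ] (b : OrthonormalBasis κ ℝ E)
    {p : ℝ} (hp : 0 < p) (hp2 : p ≤ 2) (A : Matrix ι ι ℝ) {x : ι → E} (hx : ∑ k, ‖x k‖ ^ p ≤ 1) :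
    ∃ t : ι → ℝ, ∑ k, |t k| ^ p ≤ 1 ∧
      ∑ i, ∑ j, A i j * inner ℝ (x i) (x j) = ∑ i, ∑ j, A i j * t i * t j := by
  set S := ∑ i, ∑ j, A i j * inner ℝ (x i) (x j) with hS
  rcases eq_or_ne S 0 with hS0 | hS0
  · exact ⟨0, by simp [Real.zero_rpow hp.ne'], by simp [hS0]⟩
  let t (l : κ) (k : ι) : ℝ := inner ℝ (b l) (x k)
  let f (l : κ) : ℝ := (∑ i, ∑ j, A i j * t l i * t l j) / S
  let g (l : κ) : ℝ := (∑ k, |t l k| ^ p) ^ (2 / p)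
  have hf : ∑ l, f l = 1 := by
    rw [← sum_div, ← sum_sum_mul_inner_eq_sum_coord b A x, ← hS, div_self hS0]
  have hg : ∑ l, g l ≤ 1 := (sum_rpow_sum_abs_coord_rpow_le b hp hp2 x).trans
    (Real.rpow_le_one (by positivity) hx (by positivity))
  obtain ⟨l, -, hfl, hgl⟩ : ∃ l ∈ univ, 0 < f l ∧ g l ≤ f l :=
    exists_pos_and_le_of_sum_le_sum (fun l _ ↦ by positivity) (hg.trans_eq hf.symm)
      (hf ▸ one_pos)
  refine ⟨fun k ↦ t l k / √(f l), sum_abs_div_sqrt_rpow_le_one hp hfl hgl, ?_⟩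
  rw [sum_sum_mul_div_sqrt hfl.le, eq_div_iff hfl.ne', mul_div_cancel₀ _ hS0]

theorem exists_scalar_value_eq {p : ℝ} (hp : 0 < p) (hp2 : p ≤ 2) (A : Matrix ι ι ℝ)
    {x : ι → E} (hx : ∑ k, ‖x k‖ ^ p ≤ 1) :
    ∃ t : ι → ℝ, ∑ k, |t k| ^ p ≤ 1 ∧
      ∑ i, ∑ j, A i j * inner ℝ (x i) (x j) = ∑ i, ∑ j, A i j * t i * t j := by
  let V := Submodule.span ℝ (Set.range x)
  have : FiniteDimensional ℝ V := FiniteDimensional.span_of_finite ℝ (Set.finite_range x)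
  let y (k : ι) : V := ⟨x k, Submodule.subset_span (Set.mem_range_self k)⟩
  exact exists_scalar_value_eq_of_orthonormalBasis (stdOrthonormalBasis ℝ V) hp hp2 A (x := y) hx

theorem sum_sum_mul_inner_smul_of_norm_eq_one {e : E} (he : ‖e‖ = 1) (A : Matrix ι ι ℝ)
    (t : ι → ℝ) :
    ∑ i, ∑ j, A i j * inner ℝ (t i • e) (t j • e) = ∑ i, ∑ j, A i j * t i * t j := by
  have hinner (i j : ι) : inner ℝ (t i • e) (t j • e) = t i * t j := by
    rw [real_inner_smul_left, real_inner_smul_right, real_inner_self_eq_norm_sq, he, one_pow,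
      mul_one]
  simp_rw [hinner, mul_assoc]

theorem lp_vector_max_eq_scalar_max_general [Nontrivial E] {p : ℝ} (hp : 0 < p) (hp2 : p ≤ 2)
    (A : Matrix ι ι ℝ) :
    {s : ℝ | ∃ x : ι → E, ∑ k, ‖x k‖ ^ p ≤ 1 ∧ s = ∑ i, ∑ j, A i j * inner ℝ (x i) (x j)} =
      {s : ℝ | ∃ t : ι → ℝ, ∑ k, |t k| ^ p ≤ 1 ∧ s = ∑ i, ∑ j, A i j * t i * t j} := by
  ext s
  constructor
  · rintro ⟨x, hx, rfl⟩
    exact exists_scalar_value_eq hp hp2 A hx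
  · rintro ⟨t, ht, rfl⟩
    obtain ⟨e, he⟩ := exists_norm_eq E zero_le_one
    exact ⟨fun k ↦ t k • e, by simpa [norm_smul, he] using ht,
      (sum_sum_mul_inner_smul_of_norm_eq_one he A t).symm⟩

end InnerProductSpace

/-- For `p ∈ [1, 2]`, the vector-valued `L_p` Grothendieck maximum coincides with the
scalar one. -/
theorem lp_vector_max_eq_scalar_max {n : ℕ} (p : ℝ) (hp1 : 1 ≤ p) (hp2 : p ≤ 2)
    (A : Matrix (Fin n) (Fin n) ℝ) :
    sSup {s : ℝ | ∃ x : Fin n → EuclideanSpace ℝ (Fin n),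
        (∑ k, ‖x k‖ ^ p) ≤ 1 ∧ s = ∑ i, ∑ j, A i j * (inner ℝ (x i) (x j) : ℝ)} =
      sSup {s : ℝ | ∃ t : Fin n → ℝ, (∑ k, |t k| ^ p) ≤ 1 ∧
        s = ∑ i, ∑ j, A i j * t i * t j} := by
  cases n with
  | zero => simp
  | succ n => rw [lp_vector_max_eq_scalar_max_general (one_pos.trans_le hp1) hp2]
end

section
/- Let A = (a_{ij}) be an n × n symmetric positive semidefinite real matrix that is centered, i.e., ∑_{i=1}^n ∑_{j=1}^n a_{ij} = 0. Let v_1, …, v_k ∈ ℝ^k, let w ∈ ℝ^k and R ≥ 0 be such that ‖v_ℓ − w‖₂ ≤ R for all ℓ ∈ {1,…,k}. Then for every map σ : {1,…,n} → {1,…,k}, one has ∑_{i=1}^n ∑_{j=1}^n a_{ij} ⟨v_{σ(i)}, v_{σ(j)}⟩ ≤ R² · max over unit vectors x_1, …, x_n ∈ ℝⁿ of ∑_{i=1}^n ∑_{j=1}^n a_{ij} ⟨x_i, x_j⟩. -/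
/-!
Since `A` is positive semidefinite and its entries sum to zero, the all-ones vector lies in its
kernel, so translating all the vectors by `-w` does not change the objective; we may therefore
assume that they have norm at most `R`. Adding the diagonal matrix with entries `R ^ 2 - ‖y i‖ ^ 2`
to the Gram matrix of such vectors `y i` gives a positive semidefinite matrix of size `n`, hence the
Gram matrix of vectors of norm exactly `R` in `ℝⁿ`. This only changes the inner products on the
diagonal, where the entries of `A` are nonnegative, so the objective does not decrease.
-/

section GramMatrix

open scoped ComplexOrder

variable {𝕜 ι E : Type*} [RCLike 𝕜] [Fintype ι]

theorem sum_row_eq_zero_of_posSemidef {A : Matrix ι ι 𝕜} (hA : A.PosSemidef)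
    (hsum : ∑ i, ∑ j, A i j = 0) (i : ι) : ∑ j, A i j = 0 := by
  have hker : A.mulVec 1 = 0 :=
    (hA.dotProduct_mulVec_zero_iff 1).1 (by simpa [dotProduct, Matrix.mulVec] using hsum)
  simpa [dotProduct, Matrix.mulVec] using congrFun hker i

open scoped MatrixOrder Matrix.Norms.L2Operator in
theorem exists_gram_eq_of_posSemidef {G : Matrix ι ι 𝕜} (hG : G.PosSemidef) :
    ∃ x : ι → EuclideanSpace 𝕜 ι, Matrix.gram 𝕜 x = G := by
  classical
  obtain ⟨B, rfl⟩ := CStarAlgebra.nonneg_iff_eq_star_mul_self.mp hG.nonneg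
  exact ⟨fun i => WithLp.toLp 2 (B.col i), Matrix.ext fun i j => inner_matrix_col_col B B i j⟩

theorem exists_norm_eq_and_inner_eq_of_norm_le [SeminormedAddCommGroup E] [InnerProductSpace 𝕜 E]
    {y : ι → E} {r : ι → ℝ} (hy : ∀ i, ‖y i‖ ≤ r i) :
    ∃ x : ι → EuclideanSpace 𝕜 ι, (∀ i, ‖x i‖ = r i) ∧
      Pairwise fun i j => inner 𝕜 (x i) (x j) = inner 𝕜 (y i) (y j) := by
  classical
  have hr : ∀ i, 0 ≤ r i := fun i => (norm_nonneg _).trans (hy i)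
  let d : ι → 𝕜 := fun i => ((r i ^ 2 - ‖y i‖ ^ 2 : ℝ) : 𝕜)
  have hd : 0 ≤ d := fun i =>
    RCLike.ofReal_nonneg.2 (sub_nonneg.2 (pow_le_pow_left₀ (norm_nonneg _) (hy i) 2))
  obtain ⟨x, hx⟩ := exists_gram_eq_of_posSemidef
    ((Matrix.posSemidef_gram 𝕜 y).add (Matrix.PosSemidef.diagonal hd))
  have hinner : ∀ i j, inner 𝕜 (x i) (x j) = inner 𝕜 (y i) (y j) + Matrix.diagonal d i j :=
    fun i j => congrFun (congrFun hx i) j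
  refine ⟨x, fun i => ?_, fun i j hij => ?_⟩
  · have hsq : ((‖x i‖ ^ 2 : ℝ) : 𝕜) = ((r i ^ 2 : ℝ) : 𝕜) := by
      simpa [d, inner_self_eq_norm_sq_to_K] using hinner i i
    exact (pow_left_inj₀ (norm_nonneg _) (hr i) two_ne_zero).1 (RCLike.ofReal_injective hsq)
  · exact (hinner i j).trans (by rw [Matrix.diagonal_apply_ne _ hij, add_zero])

end GramMatrix

section QuadraticForm

variable {ι E F : Type*} [Fintype ι] {A : Matrix ι ι ℝ}

theorem posSemidef_of_isSymm_of_sum_nonneg (hsymm : A.IsSymm)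
    (hnonneg : ∀ t : ι → ℝ, 0 ≤ ∑ i, ∑ j, A i j * t i * t j) : A.PosSemidef := by
  refine .of_dotProduct_mulVec_nonneg (Matrix.isHermitian_iff_isSymm.2 hsymm) fun t => ?_
  have hexpand : star t ⬝ᵥ A.mulVec t = ∑ i, ∑ j, A i j * t i * t j := by
    simp only [dotProduct, Matrix.mulVec, star_trivial, Finset.mul_sum]
    exact Finset.sum_congr rfl fun i _ => Finset.sum_congr rfl fun j _ => by ring
  exact hexpand ▸ hnonneg t

variable [SeminormedAddCommGroup E] [InnerProductSpace ℝ E]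
  [SeminormedAddCommGroup F] [InnerProductSpace ℝ F]

/-- The value at the vectors `x i` of the quadratic form of the matrix `A`, with products of scalars
replaced by inner products. It is the objective of both kernel clustering, where the `x i` are the
vectors attached to the clusters, and its semidefinite relaxation. -/
def gramForm (A : Matrix ι ι ℝ) (x : ι → E) : ℝ :=
  ∑ i, ∑ j, A i j * inner ℝ (x i) (x j)

/-- The value of the semidefinite relaxation of kernel clustering: the supremum of the objective
over families of unit vectors. Taking these in `EuclideanSpace ℝ ι` is no restriction, as
`Fintype.card ι` vectors span a space of dimension at most `Fintype.card ι`. -/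
noncomputable def sdpValue (A : Matrix ι ι ℝ) : ℝ :=
  sSup {s | ∃ x : ι → EuclideanSpace ℝ ι, (∀ i, ‖x i‖ = 1) ∧ s = gramForm A x}

theorem gramForm_smul (c : ℝ) (x : ι → E) : gramForm A (c • x) = c ^ 2 * gramForm A x := by
  simp only [gramForm, Finset.mul_sum, Pi.smul_apply, real_inner_smul_left, real_inner_smul_right]
  exact Finset.sum_congr rfl fun i _ => Finset.sum_congr rfl fun j _ => by ring

theorem gramForm_sub_const (hrow : ∀ i, ∑ j, A i j = 0) (hcol : ∀ j, ∑ i, A i j = 0)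
    (x : ι → E) (w : E) : gramForm A (fun i => x i - w) = gramForm A x := by
  have hleft : ∑ i, ∑ j, A i j * inner ℝ (x i) w = 0 := by
    simp [← Finset.sum_mul, hrow]
  have hright : ∑ i, ∑ j, A i j * (inner ℝ w (x j) - inner ℝ w w) = 0 := by
    rw [Finset.sum_comm]
    simp [← Finset.sum_mul, hcol]
  have hexpand : gramForm A (fun i => x i - w) = gramForm A x - ∑ i, ∑ j, A i j * inner ℝ (x i) w
      - ∑ i, ∑ j, A i j * (inner ℝ w (x j) - inner ℝ w w) := by
    simp only [gramForm, inner_sub_left, inner_sub_right, ← Finset.sum_sub_distrib]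
    exact Finset.sum_congr rfl fun i _ => Finset.sum_congr rfl fun j _ => by ring
  rw [hexpand, hleft, hright, sub_zero, sub_zero]

theorem gramForm_le_gramForm_of_norm_le (hdiag : ∀ i, 0 ≤ A i i) {x : ι → E} {y : ι → F}
    (hnorm : ∀ i, ‖x i‖ ≤ ‖y i‖)
    (hinner : Pairwise fun i j => inner ℝ (x i) (x j) = inner ℝ (y i) (y j)) :
    gramForm A x ≤ gramForm A y := by
  refine Finset.sum_le_sum fun i _ => Finset.sum_le_sum fun j _ => ?_
  obtain rfl | hij := eq_or_ne i j
  · rw [real_inner_self_eq_norm_sq, real_inner_self_eq_norm_sq]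
    exact mul_le_mul_of_nonneg_left (pow_le_pow_left₀ (norm_nonneg _) (hnorm i) 2) (hdiag i)
  · exact (congrArg (A i j * ·) (hinner hij)).le

theorem gramForm_le_sum_abs {x : ι → E} (hx : ∀ i, ‖x i‖ ≤ 1) :
    gramForm A x ≤ ∑ i, ∑ j, |A i j| := by
  refine Finset.sum_le_sum fun i _ => Finset.sum_le_sum fun j _ => ?_
  have hinner : |inner ℝ (x i) (x j)| ≤ 1 :=
    (abs_real_inner_le_norm _ _).trans (mul_le_one₀ (hx i) (norm_nonneg _) (hx j))
  calc A i j * inner ℝ (x i) (x j) ≤ |A i j| * |inner ℝ (x i) (x j)| :=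
        (le_abs_self _).trans_eq (abs_mul _ _)
    _ ≤ |A i j| := mul_le_of_le_one_right (abs_nonneg _) hinner

theorem gramForm_le_sdpValue {x : ι → EuclideanSpace ℝ ι} (hx : ∀ i, ‖x i‖ = 1) :
    gramForm A x ≤ sdpValue A := by
  refine le_csSup ⟨∑ i, ∑ j, |A i j|, ?_⟩ ⟨x, hx, rfl⟩
  rintro _ ⟨y, hy, rfl⟩
  exact gramForm_le_sum_abs fun i => (hy i).le

theorem gramForm_le_sq_mul_sdpValue_of_norm_eq {x : ι → EuclideanSpace ℝ ι} {R : ℝ}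
    (hx : ∀ i, ‖x i‖ = R) : gramForm A x ≤ R ^ 2 * sdpValue A := by
  obtain rfl | hR := eq_or_ne R 0
  · have hzero : ∀ i, x i = 0 := fun i => norm_eq_zero.1 (hx i)
    simp [gramForm, hzero]
  · have hunit : ∀ i, ‖(R⁻¹ • x) i‖ = 1 := fun i => by
      have hxi : x i ≠ 0 := norm_ne_zero_iff.1 (hx i ▸ hR)
      simpa [hx i] using norm_smul_inv_norm (𝕜 := ℝ) hxi
    calc gramForm A x = R ^ 2 * gramForm A (R⁻¹ • x) := by
          rw [← gramForm_smul, smul_inv_smul₀ hR]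
      _ ≤ R ^ 2 * sdpValue A :=
          mul_le_mul_of_nonneg_left (gramForm_le_sdpValue hunit) (sq_nonneg R)

theorem gramForm_le_sq_mul_sdpValue_of_norm_le (hdiag : ∀ i, 0 ≤ A i i) {y : ι → E} {R : ℝ}
    (hy : ∀ i, ‖y i‖ ≤ R) : gramForm A y ≤ R ^ 2 * sdpValue A := by
  obtain ⟨x, hx, hinner⟩ := exists_norm_eq_and_inner_eq_of_norm_le (𝕜 := ℝ) hy
  calc gramForm A y ≤ gramForm A x :=
        gramForm_le_gramForm_of_norm_le hdiag (fun i => (hy i).trans_eq (hx i).symm)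
          fun _ _ hij => (hinner hij).symm
    _ ≤ R ^ 2 * sdpValue A := gramForm_le_sq_mul_sdpValue_of_norm_eq hx

theorem kernel_clustering_le_R_sq_mul_sdp_general (hdiag : ∀ i, 0 ≤ A i i)
    (hrow : ∀ i, ∑ j, A i j = 0) (hcol : ∀ j, ∑ i, A i j = 0) {x : ι → E} {w : E} {R : ℝ}
    (hx : ∀ i, ‖x i - w‖ ≤ R) : gramForm A x ≤ R ^ 2 * sdpValue A :=
  gramForm_sub_const hrow hcol x w ▸ gramForm_le_sq_mul_sdpValue_of_norm_le hdiag hx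

end QuadraticForm

/-- The kernel clustering lower bound: for a centered symmetric positive semidefinite
matrix `A`, vectors `v₁, …, v_k` contained in a ball of radius `R` centered at `w`, and
any assignment `σ`, the clustering objective is at most `R²` times the semidefinite
relaxation (the maximum of the quadratic form over unit vectors in `ℝⁿ`). -/
theorem kernel_clustering_le_R_sq_mul_sdp {n k : ℕ} (A : Matrix (Fin n) (Fin n) ℝ)
    (hsymm : ∀ i j, A i j = A j i)
    (hpsd : ∀ t : Fin n → ℝ, 0 ≤ ∑ i, ∑ j, A i j * t i * t j)
    (hcent : ∑ i, ∑ j, A i j = 0)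
    (v : Fin k → EuclideanSpace ℝ (Fin k)) (w : EuclideanSpace ℝ (Fin k))
    (R : ℝ) (hR : 0 ≤ R) (hv : ∀ ℓ, ‖v ℓ - w‖ ≤ R) (σ : Fin n → Fin k) :
    ∑ i, ∑ j, A i j * (inner ℝ (v (σ i)) (v (σ j)) : ℝ) ≤
      R ^ 2 * sSup {s : ℝ | ∃ x : Fin n → EuclideanSpace ℝ (Fin n),
        (∀ i, ‖x i‖ = 1) ∧ s = ∑ i, ∑ j, A i j * (inner ℝ (x i) (x j) : ℝ)} := by
  have hA : A.PosSemidef := posSemidef_of_isSymm_of_sum_nonneg (.ext fun i j => hsymm j i) hpsd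
  have hrow : ∀ i, ∑ j, A i j = 0 := sum_row_eq_zero_of_posSemidef hA hcent
  have hcol : ∀ j, ∑ i, A i j = 0 := fun j => by simpa only [hsymm j] using hrow j
  exact kernel_clustering_le_R_sq_mul_sdp_general (fun _ => hA.diag_nonneg) hrow hcol
    fun i => hv (σ i)
end
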